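/- arXiv:2409.07264 — 10 statements merged into one kernel-verified Lean document; each statement's English description precedes it below -/
import Mathlib

section
/- The subspace {c : σ → ℂ | Σ_{ρ∈σ} c(ρ)·v(ρ) = 0} of the space of functions σ → ℂ is spanned (as a ℂ-subspace) by the following vectors: (i) the functions u : σ → ℂ with u(ρ) = 0 for all ρ ∉ Σ₁ and Σ_{ρ∈Σ₁} u(ρ)·v(ρ) = 0, and (ii) the functions e_ρ + e_{ι(ρ)} for all ρ ∈ σ with ι(ρ) ≠ ρ. (Lemma 4.5 of the paper: Σ(1)^⊥ is generated by Σ₁^⊥ and the vectors ᵖc.) -/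
/-!
Each `e_ρ + e_{ι ρ}` with `ι ρ ≠ ρ` is killed by `c ↦ ∑ c ρ • v ρ` because `v (ι ρ) = -v ρ`.
Conversely, if `ρ ∉ Sig1` then `ι ρ ∈ Sig1`, so `ρ` is paired. Subtracting
`∑_{ρ ∉ Sig1} c ρ • (e_ρ + e_{ι ρ})` from a relation `c` therefore yields a relation; it vanishes
outside `Sig1`, because the terms `e_{ι ρ}` only affect coordinates in `Sig1`.
-/

open scoped BigOperators

/-- Lemma 4.5 of the paper: `Σ(1)^⊥` is spanned by `Σ₁^⊥` together with the vectors
`e_ρ + e_{ι ρ}` for the paired rays. -/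
theorem stmt0 {σ : Type*} [Fintype σ] [DecidableEq σ]
    (ι : σ → σ) (hι : Function.Involutive ι)
    (Sig1 : Finset σ) (hSig : ∀ ρ : σ, ρ ∈ Sig1 ∨ ι ρ ∈ Sig1)
    {W : Type*} [AddCommGroup W] [Module ℂ W]
    (v : σ → W) (hv : ∀ ρ : σ, ι ρ ≠ ρ → v (ι ρ) = -v ρ)
    (c : σ → ℂ) :
    (∑ ρ : σ, c ρ • v ρ = 0) ↔
      c ∈ Submodule.span ℂ
        ({u : σ → ℂ | (∀ ρ ∉ Sig1, u ρ = 0) ∧ ∑ ρ ∈ Sig1, u ρ • v ρ = 0} ∪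
         {f : σ → ℂ | ∃ ρ : σ, ι ρ ≠ ρ ∧
            f = Pi.single ρ (1 : ℂ) + Pi.single (ι ρ) (1 : ℂ)}) := by
  have hsum : ∀ u : σ → ℂ, (∀ ρ ∉ Sig1, u ρ = 0) →
      ∑ ρ ∈ Sig1, u ρ • v ρ = Fintype.linearCombination ℂ v u := by
    intro u hu
    rw [Fintype.linearCombination_apply]
    exact Finset.sum_subset (Finset.subset_univ _) fun ρ _ h => by rw [hu ρ h, zero_smul]
  have hpair : ∀ ρ, ι ρ ≠ ρ → Fintype.linearCombination ℂ v
      (Pi.single ρ (1 : ℂ) + Pi.single (ι ρ) (1 : ℂ)) = 0 := by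
    intro ρ h
    rw [map_add, Fintype.linearCombination_apply_single, Fintype.linearCombination_apply_single,
      hv ρ h, one_smul, one_smul, add_neg_cancel]
  rw [← Fintype.linearCombination_apply ℂ v c]
  constructor
  · intro hc
    have hne : ∀ ρ ∈ Sig1ᶜ, ι ρ ≠ ρ := by
      intro ρ h e
      rw [Finset.mem_compl] at h
      rcases hSig ρ with h' | h'
      · exact h h'
      · exact h (e ▸ h')
    set d : σ → ℂ := ∑ ρ ∈ Sig1ᶜ, c ρ • (Pi.single ρ (1 : ℂ) + Pi.single (ι ρ) (1 : ℂ)) with hd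
    have hLd : Fintype.linearCombination ℂ v d = 0 := by
      rw [hd, map_sum]
      refine Finset.sum_eq_zero fun ρ h => ?_
      rw [map_smul, hpair ρ (hne ρ h), smul_zero]
    have hdc : ∀ τ ∉ Sig1, (c - d) τ = 0 := by
      intro τ hτ
      rw [Pi.sub_apply, sub_eq_zero, hd, Finset.sum_apply,
        Finset.sum_eq_single_of_mem τ (Finset.mem_compl.2 hτ)]
      · simp [Pi.single_eq_of_ne (hne τ (Finset.mem_compl.2 hτ)).symm]
      · intro ρ hρ hρτ
        have h1 : τ ≠ ι ρ := by
          rintro rfl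
          exact hτ ((hSig ρ).resolve_left (Finset.mem_compl.1 hρ))
        simp [Pi.single_eq_of_ne h1, Pi.single_eq_of_ne hρτ.symm]
    rw [← sub_add_cancel c d]
    refine add_mem (Submodule.subset_span (Or.inl ⟨hdc, ?_⟩)) (sum_mem fun ρ h => ?_)
    · rw [hsum _ hdc, map_sub, hc, hLd, sub_zero]
    · exact Submodule.smul_mem _ _ (Submodule.subset_span (Or.inr ⟨ρ, hne ρ h, rfl⟩))
  · intro hc
    refine LinearMap.mem_ker.1 (Submodule.span_le.2 ?_ hc)
    rintro f (⟨h0, h⟩ | ⟨ρ, h, rfl⟩)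
    · exact LinearMap.mem_ker.2 ((hsum f h0).symm.trans h)
    · exact LinearMap.mem_ker.2 (hpair ρ h)
end

section
/- The ideal I′ equals the ideal of P generated by the polynomials Σ_{ρ∈Σ₁} u(ρ)·S_ρ·T_ρ for u ∈ K₁ together with the polynomials S_ρ·T_ρ + S_{ι(ρ)}·T_{ι(ρ)} for all ρ ∈ σ with ι(ρ) ≠ ρ. (This is the identification of the two presentations of the ring R′ ≅ R̃′ in the proof of Lemma 4.6 of the paper.) -/
open scoped BigOperators
open MvPolynomial

/-!
Given a relation `c`, let `a` be its restriction to the complement of `Σ₁`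
(extended by zero) and put `u ρ = c ρ - a ρ - a (ι ρ)`. Since `ι ρ ∈ Σ₁` whenever `ρ ∉ Σ₁`, the
function `u` vanishes off `Σ₁`, and for every family `g` of vectors
`∑ c ρ • g ρ = ∑ u ρ • g ρ + ∑ a ρ • (g ρ + g (ι ρ))` (`sum_smul_fold`).
For `g = v` the last sum vanishes, because `a` is supported on paired rays, so `u` is again a
relation; for `g ρ = S_ρ T_ρ` the identity writes the generator attached to `c` in terms of the
second set of generators. Conversely, each generator of the second kind is the generator attached
to a particular relation: to `u` itself, or to the indicator function of a pair `{ρ, ι ρ}`.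
-/

/-- Folding the coefficients `a` along the involution `ι`. -/
theorem sum_smul_fold {σ M : Type*} [Fintype σ] [AddCommGroup M] [Module ℂ M]
    (ι : σ → σ) (hι : Function.Involutive ι) (c a : σ → ℂ) (g : σ → M) :
    ∑ ρ, c ρ • g ρ =
      ∑ ρ, (c ρ - a ρ - a (ι ρ)) • g ρ + ∑ ρ, a ρ • (g ρ + g (ι ρ)) := by
  have h : ∑ ρ, a (ι ρ) • g ρ = ∑ ρ, a ρ • g (ι ρ) := by
    rw [← Equiv.sum_comp (hι.toPerm ι)]
    simp [hι _]
  simp only [sub_smul, smul_add, Finset.sum_sub_distrib, Finset.sum_add_distrib, h]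
  abel

/-- Identification of the two presentations of the ring `R′ ≅ R̃′` in the proof of
Lemma 4.6 of the paper: the ideal `I′` generated by the relations
`Σ_ρ c(ρ)·S_ρ·T_ρ` for `c ∈ K = Σ(1)^⊥` equals the ideal generated by the relations
`Σ_{ρ∈Σ₁} u(ρ)·S_ρ·T_ρ` for `u ∈ K₁ = Σ₁^⊥` together with
`S_ρ·T_ρ + S_{ι ρ}·T_{ι ρ}` for the paired rays. -/
theorem stmt1 {σ : Type*} [Fintype σ] [DecidableEq σ]
    (ι : σ → σ) (hι : Function.Involutive ι)
    (Sig1 : Finset σ) (hSig : ∀ ρ : σ, ρ ∈ Sig1 ∨ ι ρ ∈ Sig1)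
    {W : Type*} [AddCommGroup W] [Module ℂ W]
    (v : σ → W) (hv : ∀ ρ : σ, ι ρ ≠ ρ → v (ι ρ) = -v ρ) :
    Ideal.span
      {p : MvPolynomial (σ ⊕ σ) ℂ |
        ∃ c : σ → ℂ, (∑ ρ : σ, c ρ • v ρ = 0) ∧
          p = ∑ ρ : σ, C (c ρ) * X (Sum.inl ρ) * X (Sum.inr ρ)} =
    Ideal.span
      ({p : MvPolynomial (σ ⊕ σ) ℂ |
          ∃ u : σ → ℂ, (∑ ρ : σ, u ρ • v ρ = 0) ∧ (∀ ρ ∉ Sig1, u ρ = 0) ∧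
            p = ∑ ρ ∈ Sig1, C (u ρ) * X (Sum.inl ρ) * X (Sum.inr ρ)} ∪
       {p : MvPolynomial (σ ⊕ σ) ℂ |
          ∃ ρ : σ, ι ρ ≠ ρ ∧
            p = X (Sum.inl ρ) * X (Sum.inr ρ) +
                X (Sum.inl (ι ρ)) * X (Sum.inr (ι ρ))}) := by
  have hC : ∀ (c : ℂ) (ρ : σ),
      (C c * X (Sum.inl ρ) * X (Sum.inr ρ) : MvPolynomial (σ ⊕ σ) ℂ) =
        c • (X (Sum.inl ρ) * X (Sum.inr ρ)) := by
    intro c ρ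
    rw [mul_assoc, C_mul']
  apply le_antisymm
  · rw [Ideal.span_le]
    rintro p ⟨c, hc, rfl⟩
    let a : σ → ℂ := fun ρ => if ρ ∈ Sig1 then 0 else c ρ
    have ha : ∀ ρ, ι ρ = ρ → a ρ = 0 := by
      intro ρ h
      have := hSig ρ
      rw [h, or_self] at this
      simp [a, this]
    have hu : ∀ ρ ∉ Sig1, c ρ - a ρ - a (ι ρ) = 0 := by
      intro ρ h
      simp [a, h, (hSig ρ).resolve_left h]
    have huv : ∑ ρ, (c ρ - a ρ - a (ι ρ)) • v ρ = 0 := by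
      rw [sum_smul_fold ι hι c a v] at hc
      rwa [Finset.sum_eq_zero (f := fun ρ => a ρ • (v ρ + v (ι ρ))), add_zero] at hc
      intro ρ _
      by_cases h : ι ρ = ρ
      · simp [ha ρ h]
      · simp [hv ρ h]
    simp only [hC, SetLike.mem_coe]
    rw [sum_smul_fold ι hι c a]
    apply Ideal.add_mem
    · apply Ideal.subset_span
      refine Or.inl ⟨_, huv, hu, ?_⟩
      symm
      apply Finset.sum_subset (Finset.subset_univ _)
      intro ρ _ h
      rw [hu ρ h, zero_smul]
    · apply Ideal.sum_mem
      intro ρ _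
      by_cases h : ι ρ = ρ
      · simp [ha ρ h]
      · rw [← C_mul']
        exact Ideal.mul_mem_left _ _ (Ideal.subset_span (Or.inr ⟨ρ, h, rfl⟩))
  · rw [Ideal.span_le]
    rintro p (⟨u, hu, hu0, rfl⟩ | ⟨ρ, hρ, rfl⟩)
    · apply Ideal.subset_span
      refine ⟨u, hu, Finset.sum_subset (Finset.subset_univ _) ?_⟩
      intro ρ _ h
      simp [hu0 ρ h]
    · apply Ideal.subset_span
      refine ⟨Pi.single ρ 1 + Pi.single (ι ρ) 1, ?_, ?_⟩
      · simp [add_smul, Finset.sum_add_distrib, Pi.single_apply, ite_smul, hv ρ hρ]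
      · simp only [hC]
        simp [add_smul, Finset.sum_add_distrib, Pi.single_apply, ite_smul]
end

section
/- Let φ : P → P be the ℂ-algebra endomorphism with φ(S_ρ) = S_ρ for all ρ ∈ σ, φ(T_ρ) = S_{ι(ρ)}·T_ρ if ι(ρ) ≠ ρ, and φ(T_ρ) = T_ρ if ι(ρ) = ρ. Then φ(I′) ⊆ I; consequently φ induces a ℂ-algebra homomorphism φ̄ : P/I′ → P/I. (Well-definedness part of Lemma 4.6 of the paper: the toric morphism φ induces a morphism R′ → R.) -/
/-!
For `c` in `K`, folding `c` along the involution gives a coefficient vector `u` supported on `Sig1`: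
`u ρ = c ρ - c (ι ρ)` if `ρ ∈ Sig1` and `ι ρ ∉ Sig1`, and `u ρ = c ρ` if both lie in `Sig1`.
For every vector-valued family `f`, the sums `∑ c ρ • f ρ` and `∑ u ρ • f ρ` differ by
`∑ c ρ • (f ρ + f (ι ρ))` over `ρ ∉ Sig1` (`sum_eq_sum_foldCoeff_add`). Every `ρ ∉ Sig1` is paired.

With `f = v` the correction vanishes because `v (ι ρ) = -v ρ`, so `u` lies in `K₁`. With
`f ρ = Ŝ_ρ T_ρ` the left side is the image under `φ` of the generator of `I'` attached to `c`, the
sum over `u` is a generator of `I`, and, since `Ŝ` is invariant under `ι`, the correction is a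
combination of the generators `T_ρ + T_{ι ρ}` of `I`.
-/

open scoped BigOperators
open MvPolynomial

/-- The coefficients `c` folded along `ι` onto `s`: an index `ρ ∈ s` whose partner `ι ρ` is not in
`s` absorbs `-c (ι ρ)`. If both `ρ` and `ι ρ` lie in `s`, then `c` is left unchanged there. -/
def foldCoeff {σ : Type*} [DecidableEq σ] (ι : σ → σ) (s : Finset σ) (c : σ → ℂ) (ρ : σ) : ℂ :=
  if ρ ∈ s then c ρ - (if ι ρ ∈ s then 0 else c (ι ρ)) else 0

/-- The `ι`-reindexed part of the sum over `s` cancels the terms `f (ι ρ)` of the correction sum. -/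
theorem sum_eq_sum_foldCoeff_add {σ : Type*} [Fintype σ] [DecidableEq σ]
    (ι : σ → σ) (hι : Function.Involutive ι)
    (s : Finset σ) (hs : ∀ ρ : σ, ρ ∈ s ∨ ι ρ ∈ s)
    {M : Type*} [AddCommGroup M] [Module ℂ M] (f : σ → M) (c : σ → ℂ) :
    ∑ ρ, c ρ • f ρ =
      ∑ ρ, foldCoeff ι s c ρ • f ρ + ∑ ρ, if ρ ∈ s then 0 else c ρ • (f ρ + f (ι ρ)) := by
  have key : ∑ ρ, (if ρ ∈ s ∧ ι ρ ∉ s then c (ι ρ) • f ρ else 0) =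
      ∑ ρ, (if ρ ∈ s then 0 else c ρ • f (ι ρ)) := by
    rw [← Equiv.sum_comp hι.toPerm]
    refine Finset.sum_congr rfl fun ρ _ => ?_
    have := hs ρ
    by_cases h : ρ ∈ s <;> simp_all [hι ρ]
  have split : ∀ ρ, c ρ • f ρ + (if ρ ∈ s ∧ ι ρ ∉ s then -(c (ι ρ) • f ρ) else 0) =
      foldCoeff ι s c ρ • f ρ + if ρ ∈ s then 0 else c ρ • f ρ := by
    intro ρ
    unfold foldCoeff
    by_cases h : ρ ∈ s <;> by_cases h' : ι ρ ∈ s <;> simp [h, h', sub_eq_add_neg, add_smul]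
  have hsum := Finset.sum_congr (rfl : (Finset.univ : Finset σ) = _) fun ρ _ => split ρ
  have hneg : ∑ ρ, (if ρ ∈ s ∧ ι ρ ∉ s then -(c (ι ρ) • f ρ) else 0) =
      -∑ ρ, (if ρ ∈ s ∧ ι ρ ∉ s then c (ι ρ) • f ρ else 0) := by
    rw [← Finset.sum_neg_distrib]
    exact Finset.sum_congr rfl fun ρ _ => by split_ifs <;> simp
  have hadd : ∑ ρ, (if ρ ∈ s then 0 else c ρ • (f ρ + f (ι ρ))) =
      ∑ ρ, (if ρ ∈ s then 0 else c ρ • f ρ) + ∑ ρ, (if ρ ∈ s then 0 else c ρ • f (ι ρ)) := by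
    rw [← Finset.sum_add_distrib]
    exact Finset.sum_congr rfl fun ρ _ => by split_ifs <;> simp
  rw [Finset.sum_add_distrib, Finset.sum_add_distrib, hneg, key] at hsum
  rw [hadd, ← add_assoc, ← hsum, neg_add_cancel_right]

/-- Well-definedness part of Lemma 4.6 of the paper: the toric morphism `φ`
(with `φ(S_ρ) = S_ρ`, `φ(T_ρ) = S_{ι ρ}·T_ρ` for paired rays and `φ(T_ρ) = T_ρ`
otherwise) maps `I′` into `I`, hence induces a morphism `φ̄ : P/I′ → P/I`. -/
theorem stmt2 {σ : Type*} [Fintype σ] [DecidableEq σ]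
    (ι : σ → σ) (hι : Function.Involutive ι)
    (Sig1 : Finset σ) (hSig : ∀ ρ : σ, ρ ∈ Sig1 ∨ ι ρ ∈ Sig1)
    {W : Type*} [AddCommGroup W] [Module ℂ W]
    (v : σ → W) (hv : ∀ ρ : σ, ι ρ ≠ ρ → v (ι ρ) = -v ρ)
    (I' I : Ideal (MvPolynomial (σ ⊕ σ) ℂ))
    (hI' : I' = Ideal.span
      {p : MvPolynomial (σ ⊕ σ) ℂ |
        ∃ c : σ → ℂ, (∑ ρ : σ, c ρ • v ρ = 0) ∧
          p = ∑ ρ : σ, C (c ρ) * X (Sum.inl ρ) * X (Sum.inr ρ)})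
    (hI : I = Ideal.span
      ({p : MvPolynomial (σ ⊕ σ) ℂ |
          ∃ u : σ → ℂ, (∑ ρ : σ, u ρ • v ρ = 0) ∧ (∀ ρ ∉ Sig1, u ρ = 0) ∧
            p = ∑ ρ ∈ Sig1,
              C (u ρ) *
                (if ι ρ = ρ then X (Sum.inl ρ)
                  else X (Sum.inl ρ) * X (Sum.inl (ι ρ))) * X (Sum.inr ρ)} ∪
       {p : MvPolynomial (σ ⊕ σ) ℂ |
          ∃ ρ : σ, ι ρ ≠ ρ ∧ p = X (Sum.inr ρ) + X (Sum.inr (ι ρ))}))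
    (φ : MvPolynomial (σ ⊕ σ) ℂ →ₐ[ℂ] MvPolynomial (σ ⊕ σ) ℂ)
    (hφ : φ = aeval (Sum.elim (fun ρ => X (Sum.inl ρ))
      (fun ρ => if ι ρ = ρ then X (Sum.inr ρ)
        else X (Sum.inl (ι ρ)) * X (Sum.inr ρ)))) :
    (∀ p ∈ I', φ p ∈ I) ∧
    ∃ φbar : (MvPolynomial (σ ⊕ σ) ℂ ⧸ I') →ₐ[ℂ] (MvPolynomial (σ ⊕ σ) ℂ ⧸ I),
      ∀ p : MvPolynomial (σ ⊕ σ) ℂ,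
        φbar (Ideal.Quotient.mk I' p) = Ideal.Quotient.mk I (φ p) := by
  have hmap : ∀ p ∈ I', φ p ∈ I := by
    suffices h : I' ≤ I.comap φ from fun p hp => h hp
    rw [hI', Ideal.span_le]
    rintro _ ⟨c, hc, rfl⟩
    have hne : ∀ ρ ∉ Sig1, ι ρ ≠ ρ := fun ρ h e => by
      have := hSig ρ
      simp_all
    have hK : ∑ ρ, foldCoeff ι Sig1 c ρ • v ρ = 0 := by
      have h := sum_eq_sum_foldCoeff_add ι hι Sig1 hSig v c
      rw [hc, Finset.sum_eq_zero (s := Finset.univ)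
        (f := fun ρ => if ρ ∈ Sig1 then 0 else c ρ • (v ρ + v (ι ρ))), add_zero] at h
      · exact h.symm
      · intro ρ _
        split_ifs with h
        · rfl
        · rw [hv ρ (hne ρ h), add_neg_cancel, smul_zero]
    let f : σ → MvPolynomial (σ ⊕ σ) ℂ := fun ρ =>
      (if ι ρ = ρ then X (Sum.inl ρ) else X (Sum.inl ρ) * X (Sum.inl (ι ρ))) * X (Sum.inr ρ)
    have hφc : φ (∑ ρ : σ, C (c ρ) * X (Sum.inl ρ) * X (Sum.inr ρ)) = ∑ ρ, c ρ • f ρ := by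
      rw [hφ, map_sum]
      refine Finset.sum_congr rfl fun ρ _ => ?_
      simp only [map_mul, aeval_X, Sum.elim_inl, Sum.elim_inr, algHom_C, algebraMap_eq,
        smul_eq_C_mul, f]
      split_ifs <;> ring
    change φ _ ∈ I
    rw [hφc, sum_eq_sum_foldCoeff_add ι hι Sig1 hSig f c, hI]
    refine Ideal.add_mem _ (Ideal.subset_span (Or.inl ⟨foldCoeff ι Sig1 c, hK, ?_, ?_⟩))
      (Ideal.sum_mem _ fun ρ _ => ?_)
    · intro ρ h
      simp [foldCoeff, h]
    · rw [← Finset.sum_subset (Finset.subset_univ Sig1)]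
      · refine Finset.sum_congr rfl fun ρ _ => ?_
        rw [smul_eq_C_mul, mul_assoc]
      · intro ρ _ h
        simp [foldCoeff, h]
    · split_ifs with h
      · exact Ideal.zero_mem _
      · have h1 := hne ρ h
        have h2 : ι (ι ρ) ≠ ι ρ := fun e => h1 (hι.injective e)
        have e : c ρ • (f ρ + f (ι ρ)) = C (c ρ) * (X (Sum.inl ρ) * X (Sum.inl (ι ρ))) *
            (X (Sum.inr ρ) + X (Sum.inr (ι ρ))) := by
          simp only [f, if_neg h1, if_neg h2, smul_eq_C_mul]
          rw [hι ρ]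
          ring
        rw [e]
        exact Ideal.mul_mem_left _ _ (Ideal.subset_span (Or.inr ⟨ρ, h1, rfl⟩))
  exact ⟨hmap, Ideal.quotientMapₐ I φ hmap, fun p => rfl⟩
end

section
/- Let I₀, I₁ : σ → ℕ and suppose there exists m ∈ ℤⁿ such that for every ρ ∈ σ one has I₀(ρ) − I₁(ρ) − ĉ(ρ) = ⟨v(ρ), m⟩, where ĉ(ρ) := I₁(ι(ρ)) if ι(ρ) ≠ ρ and ĉ(ρ) := 0 otherwise, and ⟨·,·⟩ denotes the standard bilinear pairing on ℤⁿ. Then the class in P/I of the monomial ∏_{ρ∈σ} S_ρ^{I₀(ρ)}·T_ρ^{I₁(ρ)} lies in the ℂ-subalgebra of P/I generated by the classes of the elements φ(S_ρ) = S_ρ and φ(T_ρ) (i.e., S_{ι(ρ)}·T_ρ if ι(ρ) ≠ ρ, and T_ρ if ι(ρ) = ρ) for ρ ∈ σ. (Key step in the proof of Theorem 1.4 of the paper: every 𝕋^{N−n}-invariant monomial of R lies in the subring R′.) -/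
open scoped BigOperators
open MvPolynomial

/-!
The monomial is treated one `ι`-orbit at a time. On a fixed ray `ρ` both `S_ρ` and `T_ρ` are
classes of `φ`-images. On an opposite pair `ρ, ι ρ`, put `k = I₁ ρ + I₁ (ι ρ)`; since
`v (ι ρ) = -v ρ`, adding the two instances of the invariance condition gives
`I₀ ρ + I₀ (ι ρ) = 2k`, so one of the two exponents, say `I₀ ρ`, is at least `k`. As
`T_{ι ρ} = -T_ρ` modulo `I`, the factor of the pair is, up to sign,
`(S_ρ T_ρ)^k * S_ρ^(I₀ ρ - k) * S_{ι ρ}^(I₀ (ι ρ))`, and both `S_{ι ρ} T_ρ` and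
`S_ρ T_ρ = -S_ρ T_{ι ρ}` lie in the subalgebra. The relations of `I` coming from `K₁` play no
role in the argument.
-/

/-- A product over an `ι`-stable finite set lies in `A` as soon as its factors over each
`ι`-orbit do. -/
lemma prod_mem_of_involutive {σ R : Type*} [DecidableEq σ] [CommRing R] [Algebra ℂ R]
    (A : Subalgebra ℂ R) (ι : σ → σ) (hι : Function.Involutive ι) (f : σ → R)
    (h1 : ∀ ρ, ι ρ = ρ → f ρ ∈ A) (h2 : ∀ ρ, ι ρ ≠ ρ → f ρ * f (ι ρ) ∈ A)
    (F : Finset σ) : (∀ ρ ∈ F, ι ρ ∈ F) → ∏ ρ ∈ F, f ρ ∈ A := by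
  induction F using Finset.strongInduction with
  | H F ih =>
    intro hF
    rcases F.eq_empty_or_nonempty with rfl | ⟨ρ, hρ⟩
    · simp
    rw [← Finset.mul_prod_erase F f hρ]
    by_cases h : ι ρ = ρ
    · refine mul_mem (h1 ρ h) (ih _ (Finset.erase_ssubset hρ) fun τ hτ => ?_)
      rw [Finset.mem_erase] at hτ ⊢
      exact ⟨fun e => hτ.1 (by rw [← hι τ, e, h]), hF τ hτ.2⟩
    · have hρ' : ι ρ ∈ F.erase ρ := Finset.mem_erase.2 ⟨h, hF ρ hρ⟩
      rw [← Finset.mul_prod_erase _ f hρ', ← mul_assoc]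
      refine mul_mem (h2 ρ h) (ih _
        ((Finset.erase_ssubset hρ').trans (Finset.erase_ssubset hρ)) fun τ hτ => ?_)
      simp only [Finset.mem_erase] at hτ ⊢
      exact ⟨fun e => hτ.2.1 (hι.injective e), fun e => hτ.1 (by rw [← hι τ, e]), hF τ hτ.2.2⟩

/-- The factor of one opposite pair: `x, y` are the classes of `S_ρ, S_{ι ρ}` and `t, -t` those
of `T_ρ, T_{ι ρ}`. The power of `t` is absorbed by whichever of `x, y` has a large enough
exponent. -/
lemma pair_mem {R : Type*} [CommRing R] [Algebra ℂ R] (A : Subalgebra ℂ R) {x y t : R}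
    (hx : x ∈ A) (hy : y ∈ A) (hxt : x * -t ∈ A) (hyt : y * t ∈ A) {a b i j : ℕ}
    (h : i + j ≤ a ∨ i + j ≤ b) :
    x ^ a * t ^ i * (y ^ b * (-t) ^ j) ∈ A := by
  have hs : ((-1 : R)) ^ j ∈ A := pow_mem (neg_mem (one_mem A)) j
  rw [neg_pow t j]
  rcases h with h | h <;> obtain ⟨c, rfl⟩ := Nat.exists_eq_add_of_le h
  · convert mul_mem (mul_mem (mul_mem hs (pow_mem (neg_mem hxt) (i + j))) (pow_mem hx c))
      (pow_mem hy b) using 1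
    ring
  · convert mul_mem (mul_mem (mul_mem hs (pow_mem hyt (i + j))) (pow_mem hy c))
      (pow_mem hx a) using 1
    ring

/-- Key step in the proof of Theorem 1.4 of the paper: if the exponent vectors of a
monomial `∏ S_ρ^{I₀(ρ)}·T_ρ^{I₁(ρ)}` satisfy `I₀ - I₁ - ᶜI ∈ Im(B)`, then its class
in `P/I` lies in the subalgebra generated by the classes of `φ(S_ρ)` and `φ(T_ρ)`. -/
theorem stmt4 (n : ℕ) {σ : Type*} [Fintype σ] [DecidableEq σ]
    (ι : σ → σ) (hι : Function.Involutive ι)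
    (Sig1 : Finset σ) (hSig : ∀ ρ : σ, ρ ∈ Sig1 ∨ ι ρ ∈ Sig1)
    (v : σ → Fin n → ℤ) (hv : ∀ ρ : σ, ι ρ ≠ ρ → v (ι ρ) = -v ρ)
    (I : Ideal (MvPolynomial (σ ⊕ σ) ℂ))
    (hI : I = Ideal.span
      ({p : MvPolynomial (σ ⊕ σ) ℂ |
          ∃ u : σ → ℂ,
            (∑ ρ : σ, u ρ • (fun i : Fin n => (v ρ i : ℂ))) = 0 ∧
            (∀ ρ ∉ Sig1, u ρ = 0) ∧
            p = ∑ ρ ∈ Sig1,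
              C (u ρ) *
                (if ι ρ = ρ then X (Sum.inl ρ)
                  else X (Sum.inl ρ) * X (Sum.inl (ι ρ))) * X (Sum.inr ρ)} ∪
       {p : MvPolynomial (σ ⊕ σ) ℂ |
          ∃ ρ : σ, ι ρ ≠ ρ ∧ p = X (Sum.inr ρ) + X (Sum.inr (ι ρ))}))
    (φ : MvPolynomial (σ ⊕ σ) ℂ →ₐ[ℂ] MvPolynomial (σ ⊕ σ) ℂ)
    (hφ : φ = aeval (Sum.elim (fun ρ => X (Sum.inl ρ))
      (fun ρ => if ι ρ = ρ then X (Sum.inr ρ)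
        else X (Sum.inl (ι ρ)) * X (Sum.inr ρ))))
    (I₀ I₁ : σ → ℕ)
    (hm : ∃ m : Fin n → ℤ, ∀ ρ : σ,
      (I₀ ρ : ℤ) - (I₁ ρ : ℤ) -
          (if ι ρ = ρ then 0 else (I₁ (ι ρ) : ℤ)) = ∑ i, v ρ i * m i) :
    Ideal.Quotient.mk I
        (∏ ρ : σ, X (Sum.inl ρ) ^ I₀ ρ * X (Sum.inr ρ) ^ I₁ ρ) ∈
      Algebra.adjoin ℂ
        (Set.range fun i : σ ⊕ σ => Ideal.Quotient.mk I (φ (X i))) := by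
  obtain ⟨m, hm⟩ := hm
  set A := Algebra.adjoin ℂ
    (Set.range fun i : σ ⊕ σ => Ideal.Quotient.mk I (φ (X i))) with hA
  have hgen : ∀ i, Ideal.Quotient.mk I (φ (X i)) ∈ A := fun i =>
    Algebra.subset_adjoin ⟨i, rfl⟩
  have hS : ∀ ρ, Ideal.Quotient.mk I (X (Sum.inl ρ)) ∈ A := fun ρ => by
    simpa [hφ] using hgen (Sum.inl ρ)
  have hT : ∀ ρ, ι ρ = ρ → Ideal.Quotient.mk I (X (Sum.inr ρ)) ∈ A := fun ρ h => by
    simpa [hφ, h] using hgen (Sum.inr ρ)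
  have hST : ∀ ρ, ι ρ ≠ ρ → Ideal.Quotient.mk I (X (Sum.inl (ι ρ))) *
      Ideal.Quotient.mk I (X (Sum.inr ρ)) ∈ A := fun ρ h => by
    simpa [hφ, h] using hgen (Sum.inr ρ)
  have hneg : ∀ ρ, ι ρ ≠ ρ → Ideal.Quotient.mk I (X (Sum.inr (ι ρ))) =
      -Ideal.Quotient.mk I (X (Sum.inr ρ)) := fun ρ h => by
    rw [eq_neg_iff_add_eq_zero, add_comm, ← map_add, Ideal.Quotient.eq_zero_iff_mem, hI]
    exact Ideal.subset_span (Or.inr ⟨ρ, h, rfl⟩)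
  rw [map_prod]
  refine prod_mem_of_involutive A ι hι _ (fun ρ h => ?_) (fun ρ h => ?_) Finset.univ (by simp)
  · rw [map_mul, map_pow, map_pow]
    exact mul_mem (pow_mem (hS ρ) _) (pow_mem (hT ρ h) _)
  · simp only [map_mul, map_pow]
    rw [hneg ρ h]
    have h' : ι (ι ρ) ≠ ι ρ := fun e => h (hι.injective e)
    refine pair_mem A (hS ρ) (hS _) ?_ (hST ρ h) ?_
    · have := hST (ι ρ) h'
      rwa [hι ρ, hneg ρ h] at this
    · -- The conditions at `ρ` and `ι ρ` add up to `I₀ ρ + I₀ (ι ρ) = 2 (I₁ ρ + I₁ (ι ρ))`.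
      have e1 := hm ρ
      have e2 := hm (ι ρ)
      rw [if_neg h] at e1
      rw [if_neg h', hι ρ, hv ρ h] at e2
      simp only [Pi.neg_apply, neg_mul, Finset.sum_neg_distrib] at e2
      omega
end

section
/- The ℂ-linear span in P/I of the classes of all monomials ∏ S_ρ^{I₀(ρ)}·T_ρ^{I₁(ρ)} of R-weight zero equals the ℂ-linear span in P/I of the classes of the polynomials φ(M), where M ranges over all monomials of P of R′-weight zero. (Algebraic core of Theorem 1.4 of the paper: for a smooth projective toric variety X, the invariant subalgebras agree, so Z_X = Spec S(X) is isomorphic to the toric hyperKähler variety 𝒴(A,0,0).) -/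
/-!
`φ` sends a monomial `S^J₀ T^J₁` to the monomial in which the exponent of `S_ρ` has become
`J₀ ρ + J₁ (ι ρ)` for `ρ` paired (`phi_prod`), and the `R`-weight of the image is the `R'`-weight
of the source (`sum_smul_add_twist`). This gives one inclusion.

For the other one, let `S^I₀ T^I₁` have `R`-weight zero. It need not be in the image of `φ`, because
this requires `I₁ (ι ρ) ≤ I₀ ρ` for every paired `ρ`. By exactness, the total exponents
`I₀ ρ - I₁ ρ - I₁ (ι ρ)` are the values of a linear form on the `v ρ`, hence odd under `ι`, so that
`I₀ ρ + I₀ (ι ρ) = 2 (I₁ ρ + I₁ (ι ρ))` on every pair. There is therefore enough room to exchange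
the `e ρ = I₁ ρ - I₀ (ι ρ)` (truncated) factors `T_ρ` in excess for factors `T_{ι ρ}`. Modulo the
relations `T_ρ + T_{ι ρ}` this exchange only costs a sign (`prod_pow_swap`), and it changes neither
`I₁ ρ + I₁ (ι ρ)` nor the weight.
-/

open scoped BigOperators
open MvPolynomial

section Aux

variable {σ : Type*}

/-- The values of `f` transported along `ι`, with value `0` at the fixed points of `ι`. -/
def twist [DecidableEq σ] {M : Type*} [Zero M] (ι : σ → σ) (f : σ → M) (ρ : σ) : M :=
  if ι ρ = ρ then 0 else f (ι ρ)

/-- Moving the twist `â` of the weights onto the exponents, by reindexing along `ι`. -/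
lemma sum_smul_add_twist [Fintype σ] [DecidableEq σ] {A : Type*} [AddCommGroup A]
    {ι : σ → σ} (hι : Function.Involutive ι)
    (f : σ → ℕ) (a : σ → A) :
    ∑ ρ, (f ρ : ℤ) • (a ρ + if ι ρ = ρ then 0 else a (ι ρ)) =
      ∑ ρ, ((f ρ : ℤ) + (twist ι f ρ : ℕ)) • a ρ := by
  simp only [smul_add, add_smul, Finset.sum_add_distrib]
  congr 1
  rw [← Equiv.sum_comp hι.toPerm]
  refine Finset.sum_congr rfl fun ρ _ => ?_
  by_cases h : ι ρ = ρ
  · simp [twist, h]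
  · have h' : ρ ≠ ι ρ := fun e => h e.symm
    simp [twist, h, h', hι ρ]

lemma phi_prod [Fintype σ] [DecidableEq σ] {ι : σ → σ} (hι : Function.Involutive ι)
    (φ : MvPolynomial (σ ⊕ σ) ℂ →ₐ[ℂ] MvPolynomial (σ ⊕ σ) ℂ)
    (hφ : φ = aeval (Sum.elim (fun ρ => X (Sum.inl ρ))
      (fun ρ => if ι ρ = ρ then X (Sum.inr ρ)
        else X (Sum.inl (ι ρ)) * X (Sum.inr ρ)))) (J₀ J₁ : σ → ℕ) :
    φ (∏ ρ, X (Sum.inl ρ) ^ J₀ ρ * X (Sum.inr ρ) ^ J₁ ρ) =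
      ∏ ρ, X (Sum.inl ρ) ^ (J₀ ρ + twist ι J₁ ρ) * X (Sum.inr ρ) ^ J₁ ρ := by
  have key : ∏ ρ, (X (Sum.inl ρ) : MvPolynomial (σ ⊕ σ) ℂ) ^ twist ι J₁ ρ =
      ∏ ρ, if ι ρ = ρ then 1 else X (Sum.inl (ι ρ)) ^ J₁ ρ := by
    rw [← Equiv.prod_comp hι.toPerm]
    refine Finset.prod_congr rfl fun ρ _ => ?_
    by_cases h : ι ρ = ρ
    · simp [twist, h]
    · have h' : ρ ≠ ι ρ := fun e => h e.symm
      simp [twist, h, h', hι ρ]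
  simp only [pow_add, Finset.prod_mul_distrib]
  rw [key]
  simp only [← Finset.prod_mul_distrib, map_prod]
  refine Finset.prod_congr rfl fun ρ _ => ?_
  subst hφ
  by_cases h : ι ρ = ρ
  · simp [h]
  · simp [h, mul_pow, mul_assoc]

/-- If `t` is odd under `ι` on the support of `e`, replacing each factor `t ρ` by `t (ι ρ)` in
`∏ t ρ ^ e ρ` only introduces a sign. -/
lemma prod_pow_swap [Fintype σ] {B : Type*} [CommRing B] {ι : σ → σ} (hι : Function.Involutive ι)
    (t : σ → B) (e : σ → ℕ) (ht : ∀ ρ, e ρ ≠ 0 → t ρ = -t (ι ρ)) :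
    ∏ ρ, t ρ ^ e ρ = ∏ ρ, t ρ ^ e (ι ρ) ∨ ∏ ρ, t ρ ^ e ρ = -∏ ρ, t ρ ^ e (ι ρ) := by
  suffices h : ∏ ρ, t ρ ^ e ρ = (-1) ^ (∑ ρ, e ρ) * ∏ ρ, t ρ ^ e (ι ρ) by
    rcases neg_one_pow_eq_or B (∑ ρ, e ρ) with h' | h' <;> rw [h'] at h
    · exact Or.inl (h.trans (one_mul _))
    · exact Or.inr (h.trans (neg_one_mul _))
  rw [← Finset.prod_pow_eq_pow_sum, ← Equiv.prod_comp hι.toPerm (fun ρ => t ρ ^ e (ι ρ)),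
    ← Finset.prod_mul_distrib]
  refine Finset.prod_congr rfl fun ρ _ => ?_
  by_cases h : e ρ = 0
  · simp [h, hι ρ]
  · rw [ht ρ h, neg_pow]
    simp [hι ρ]

end Aux

/-- Algebraic core of Theorem 1.4 of the paper: the `ℂ`-span in `P/I` of the classes
of the `R`-weight-zero monomials equals the `ℂ`-span of the images under `φ` of the
`R′`-weight-zero monomials; hence `Z_X = Spec S(X)` is the toric hyperKähler variety
`𝒴(A,0,0)`. -/
theorem stmt5 (n k : ℕ) {σ : Type*} [Fintype σ] [DecidableEq σ]
    (ι : σ → σ) (hι : Function.Involutive ι)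
    (Sig1 : Finset σ) (hSig : ∀ ρ : σ, ρ ∈ Sig1 ∨ ι ρ ∈ Sig1)
    (v : σ → Fin n → ℤ) (hv : ∀ ρ : σ, ι ρ ≠ ρ → v (ι ρ) = -v ρ)
    (a : σ → Fin k → ℤ)
    (hexact : ∀ d : σ → ℤ,
      (∑ ρ : σ, d ρ • a ρ = 0) ↔ ∃ m : Fin n → ℤ, ∀ ρ : σ, d ρ = ∑ i, v ρ i * m i)
    (I : Ideal (MvPolynomial (σ ⊕ σ) ℂ))
    (hI : I = Ideal.span
      ({p : MvPolynomial (σ ⊕ σ) ℂ |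
          ∃ u : σ → ℂ,
            (∑ ρ : σ, u ρ • (fun i : Fin n => (v ρ i : ℂ))) = 0 ∧
            (∀ ρ ∉ Sig1, u ρ = 0) ∧
            p = ∑ ρ ∈ Sig1,
              C (u ρ) *
                (if ι ρ = ρ then X (Sum.inl ρ)
                  else X (Sum.inl ρ) * X (Sum.inl (ι ρ))) * X (Sum.inr ρ)} ∪
       {p : MvPolynomial (σ ⊕ σ) ℂ |
          ∃ ρ : σ, ι ρ ≠ ρ ∧ p = X (Sum.inr ρ) + X (Sum.inr (ι ρ))}))
    (φ : MvPolynomial (σ ⊕ σ) ℂ →ₐ[ℂ] MvPolynomial (σ ⊕ σ) ℂ)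
    (hφ : φ = aeval (Sum.elim (fun ρ => X (Sum.inl ρ))
      (fun ρ => if ι ρ = ρ then X (Sum.inr ρ)
        else X (Sum.inl (ι ρ)) * X (Sum.inr ρ)))) :
    Submodule.span ℂ
      {q : MvPolynomial (σ ⊕ σ) ℂ ⧸ I |
        ∃ I₀ I₁ : σ → ℕ,
          (∑ ρ : σ, (I₀ ρ : ℤ) • a ρ) -
            (∑ ρ : σ, (I₁ ρ : ℤ) •
              (a ρ + if ι ρ = ρ then 0 else a (ι ρ))) = 0 ∧
          q = Ideal.Quotient.mk I
            (∏ ρ : σ, X (Sum.inl ρ) ^ I₀ ρ * X (Sum.inr ρ) ^ I₁ ρ)} =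
    Submodule.span ℂ
      {q : MvPolynomial (σ ⊕ σ) ℂ ⧸ I |
        ∃ I₀ I₁ : σ → ℕ,
          (∑ ρ : σ, ((I₀ ρ : ℤ) - (I₁ ρ : ℤ)) • a ρ) = 0 ∧
          q = Ideal.Quotient.mk I
            (φ (∏ ρ : σ, X (Sum.inl ρ) ^ I₀ ρ * X (Sum.inr ρ) ^ I₁ ρ))} := by
  have hT : ∀ ρ, ι ρ ≠ ρ → Ideal.Quotient.mk I (X (Sum.inr ρ)) =
      -Ideal.Quotient.mk I (X (Sum.inr (ι ρ))) := by
    intro ρ h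
    rw [eq_neg_iff_add_eq_zero, ← map_add, Ideal.Quotient.eq_zero_iff_mem, hI]
    exact Ideal.subset_span (Or.inr ⟨ρ, h, rfl⟩)
  apply le_antisymm
  · rw [Submodule.span_le]
    rintro q ⟨I₀, I₁, hw, rfl⟩
    rw [sum_smul_add_twist hι, ← Finset.sum_sub_distrib] at hw
    simp only [← sub_smul] at hw
    obtain ⟨m, hm⟩ := (hexact _).1 hw
    have hbal : ∀ ρ, ι ρ ≠ ρ → I₀ ρ + I₀ (ι ρ) = 2 * (I₁ ρ + I₁ (ι ρ)) := by
      intro ρ h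
      have h' : ρ ≠ ι ρ := fun e => h e.symm
      have h1 := hm ρ
      have h2 := hm (ι ρ)
      rw [hv ρ h] at h2
      simp only [Pi.neg_apply, neg_mul, Finset.sum_neg_distrib] at h2
      rw [← h1] at h2
      simp only [twist, hι ρ, if_neg h, if_neg h'] at h2
      omega
    -- Surplus of `T_ρ`; `J₁` trades it for `T_{ι ρ}`, after which `J₁ (ι ρ) ≤ I₀ ρ` on pairs.
    let e : σ → ℕ := fun ρ => if ι ρ = ρ then 0 else I₁ ρ - I₀ (ι ρ)
    have he : ∀ ρ, e ρ ≤ I₁ ρ := by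
      intro ρ
      by_cases h : ι ρ = ρ <;> simp [e, h]
    let J₁ : σ → ℕ := fun ρ => (I₁ ρ - e ρ) + e (ι ρ)
    let J₀ : σ → ℕ := fun ρ => I₀ ρ - twist ι J₁ ρ
    have hle : ∀ ρ, twist ι J₁ ρ ≤ I₀ ρ := by
      intro ρ
      by_cases h : ι ρ = ρ
      · simp [twist, h]
      · have h' : ρ ≠ ι ρ := fun e => h e.symm
        have := hbal ρ h
        simp only [twist, J₁, e, hι ρ, if_neg h, if_neg h']
        omega
    have hsum : ∀ ρ, J₁ ρ + twist ι J₁ ρ = I₁ ρ + twist ι I₁ ρ := by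
      intro ρ
      by_cases h : ι ρ = ρ
      · simp [twist, J₁, e, h]
      · have h1 := he ρ
        have h2 := he (ι ρ)
        simp only [twist, J₁, hι ρ, if_neg h]
        omega
    have hJ : ∀ ρ, J₀ ρ + twist ι J₁ ρ = I₀ ρ := fun ρ => Nat.sub_add_cancel (hle ρ)
    have hmem : Ideal.Quotient.mk I (φ (∏ ρ, X (Sum.inl ρ) ^ J₀ ρ * X (Sum.inr ρ) ^ J₁ ρ)) ∈
        Submodule.span ℂ {q : MvPolynomial (σ ⊕ σ) ℂ ⧸ I |
          ∃ I₀ I₁ : σ → ℕ,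
            (∑ ρ : σ, ((I₀ ρ : ℤ) - (I₁ ρ : ℤ)) • a ρ) = 0 ∧
            q = Ideal.Quotient.mk I
              (φ (∏ ρ : σ, X (Sum.inl ρ) ^ I₀ ρ * X (Sum.inr ρ) ^ I₁ ρ))} := by
      refine Submodule.subset_span ⟨J₀, J₁, ?_, rfl⟩
      rw [← hw]
      refine Finset.sum_congr rfl fun ρ _ => ?_
      congr 1
      have h1 := hJ ρ
      have h2 := hsum ρ
      omega
    have hswap := prod_pow_swap hι (fun ρ => Ideal.Quotient.mk I (X (Sum.inr ρ))) e
      (fun ρ h => hT ρ fun h' => h (by simp [e, h']))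
    have hEq : Ideal.Quotient.mk I (∏ ρ, X (Sum.inl ρ) ^ I₀ ρ * X (Sum.inr ρ) ^ I₁ ρ) =
          Ideal.Quotient.mk I (φ (∏ ρ, X (Sum.inl ρ) ^ J₀ ρ * X (Sum.inr ρ) ^ J₁ ρ)) ∨
        Ideal.Quotient.mk I (∏ ρ, X (Sum.inl ρ) ^ I₀ ρ * X (Sum.inr ρ) ^ I₁ ρ) =
          -Ideal.Quotient.mk I (φ (∏ ρ, X (Sum.inl ρ) ^ J₀ ρ * X (Sum.inr ρ) ^ J₁ ρ)) := by
      rw [phi_prod hι φ hφ]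
      simp only [hJ, map_prod, map_mul, map_pow, Finset.prod_mul_distrib, J₁, pow_add]
      have hsplit : ∏ ρ, Ideal.Quotient.mk I (X (Sum.inr ρ)) ^ I₁ ρ =
          (∏ ρ, Ideal.Quotient.mk I (X (Sum.inr ρ)) ^ (I₁ ρ - e ρ)) *
            ∏ ρ, Ideal.Quotient.mk I (X (Sum.inr ρ)) ^ e ρ := by
        rw [← Finset.prod_mul_distrib]
        refine Finset.prod_congr rfl fun ρ _ => ?_
        rw [← pow_add, Nat.sub_add_cancel (he ρ)]
      rw [hsplit]
      refine hswap.imp (fun h => ?_) (fun h => ?_)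
      · rw [h]
      · rw [h]
        ring
    rw [SetLike.mem_coe]
    rcases hEq with h | h <;> rw [h]
    · exact hmem
    · exact Submodule.neg_mem _ hmem
  · rw [Submodule.span_le]
    rintro q ⟨J₀, J₁, hw, rfl⟩
    refine Submodule.subset_span ⟨fun ρ => J₀ ρ + twist ι J₁ ρ, J₁, ?_, ?_⟩
    · rw [sum_smul_add_twist hι, ← Finset.sum_sub_distrib, ← hw]
      refine Finset.sum_congr rfl fun ρ _ => ?_
      rw [← sub_smul]
      congr 1
      push_cast
      ring
    · rw [phi_prod hι φ hφ]
end

section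
/- The kernel of the ℂ-algebra homomorphism ℂ[z_{ij} : 1 ≤ i, j ≤ n+1] → Q sending z_{ij} to the class of x_i·y_j is the ideal generated by the trace Σ_{i=1}^{n+1} z_{ii} together with all 2×2 minors z_{ij}·z_{kl} − z_{il}·z_{kj} (1 ≤ i, j, k, l ≤ n+1). (This encodes the paper's identification of Z_{ℙⁿ} = Spec S(ℙⁿ) with the minimal nilpotent orbit closure in sl_{n+1}, the variety of traceless (n+1)×(n+1) matrices of rank at most 1, via the Springer map (x, y) ↦ (x_i y_j).) -/
/-!
Let `φ : ℂ[z] → ℂ[x, y]` be the lift `z_{ij} ↦ x_i y_j` of the Springer map, and let `J` be the ideal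
generated by the trace and the minors. The generators of `J` map to zero by inspection. For the converse
there is a `ℂ`-linear map `ψ : ℂ[x, y] → ℂ[z] / J` which sends a monomial `x^A y^B` with `|A| = |B|` to the
class of a monomial in the `z_{ij}` obtained by pairing off the factors `x_i` with the factors `y_j`,
and every other monomial to `0`. The pairing is irrelevant because a transposition of two
neighbouring factors is exactly a `2 × 2` minor relation (`pairProd_perm_right`,
`pairProd_perm_left`), so `ψ` is linear over `ℂ[z]`: `ψ (φ q * g) = q * ψ g` (`unSpringer_lift_mul`).
If `φ f = (∑ x_i y_i) * g = φ (trace) * g`, then `f = ψ (φ f) = trace * ψ g = 0` modulo `J`.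
-/

open scoped BigOperators
open MvPolynomial

noncomputable section

/-- The coordinate ring of `T^*ℙⁿ //... `: the quotient of `ℂ[x₁,…,x_{n+1},y₁,…,y_{n+1}]`
by the ideal generated by `Σ xᵢ·yᵢ`. -/
def hypIdeal (n : ℕ) : Ideal (MvPolynomial (Fin (n + 1) ⊕ Fin (n + 1)) ℂ) :=
  Ideal.span {∑ i : Fin (n + 1), X (Sum.inl i) * X (Sum.inr i)}

/-- The Springer map on coordinate rings: `z_{ij} ↦ xᵢ·yⱼ`. -/
def springerHom (n : ℕ) :
    MvPolynomial (Fin (n + 1) × Fin (n + 1)) ℂ →ₐ[ℂ]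
      MvPolynomial (Fin (n + 1) ⊕ Fin (n + 1)) ℂ ⧸ hypIdeal n :=
  aeval fun p : Fin (n + 1) × Fin (n + 1) =>
    Ideal.Quotient.mk (hypIdeal n) (X (Sum.inl p.1) * X (Sum.inr p.2))

/-- The product `∏ a (l₁ r) (l₂ r)` over the positions `r` of two lists. -/
def pairProd {ι R : Type*} [CommRing R] (a : ι → ι → R) (l₁ l₂ : List ι) : R :=
  (List.zipWith a l₁ l₂).prod

section pairing

variable {ι R : Type*} [CommRing R] {a : ι → ι → R}

/-- The vanishing of the `2 × 2` minors makes the product independent of the order of the second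
list: adjacent transpositions suffice. -/
lemma pairProd_perm_right (ha : ∀ i j k l, a i j * a k l = a i l * a k j) {l₂ l₂' : List ι}
    (h : l₂.Perm l₂') :
    ∀ l₁ : List ι, l₁.length = l₂.length → pairProd a l₁ l₂ = pairProd a l₁ l₂' := by
  induction h with
  | nil => intros; rfl
  | cons x h ih =>
    rintro (_ | ⟨b, l⟩) hl
    · simp at hl
    · have := ih l (by simpa using hl)
      simp only [pairProd, List.zipWith_cons_cons, List.prod_cons] at this ⊢
      rw [this]
  | swap x y l =>
    rintro (_ | ⟨b, _ | ⟨c, l⟩⟩) hl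
    · simp at hl
    · simp at hl
    · simp only [pairProd, List.zipWith_cons_cons, List.prod_cons, ← mul_assoc]
      rw [ha]
  | trans h₁ h₂ ih₁ ih₂ =>
    intro l hl
    rw [ih₁ l hl, ih₂ l (hl.trans h₁.length_eq)]

lemma pairProd_flip (l₁ l₂ : List ι) :
    pairProd (fun i j => a j i) l₂ l₁ = pairProd a l₁ l₂ := by
  unfold pairProd
  rw [List.zipWith_comm]

lemma pairProd_perm_left (ha : ∀ i j k l, a i j * a k l = a i l * a k j) {l₁ l₁' : List ι}
    (h : l₁.Perm l₁') (l₂ : List ι) (hl : l₁.length = l₂.length) :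
    pairProd a l₁ l₂ = pairProd a l₁' l₂ := by
  rw [← pairProd_flip, ← pairProd_flip l₁']
  exact pairProd_perm_right (fun i j k l => by rw [ha, mul_comm, ha, mul_comm, ha]) h l₂ hl.symm

/-- The value of `ψ` on the monomial with exponent `m`: the factors `x_i` are paired with the
factors `y_j` in an arbitrary order, and an unbalanced monomial gets the value `0`. -/
def balancedCoeff (a : ι → ι → R) (m : ι ⊕ ι →₀ ℕ) : R :=
  let p := Finsupp.sumFinsuppAddEquivProdFinsupp m
  if p.1.toMultiset.card = p.2.toMultiset.card then
    pairProd a p.1.toMultiset.toList p.2.toMultiset.toList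
  else 0

lemma balancedCoeff_zero : balancedCoeff a 0 = 1 := by
  simp [balancedCoeff, pairProd]

lemma balancedCoeff_add (ha : ∀ i j k l, a i j * a k l = a i l * a k j) (i j : ι)
    (m : ι ⊕ ι →₀ ℕ) :
    balancedCoeff a (Finsupp.single (Sum.inl i) 1 + Finsupp.single (Sum.inr j) 1 + m) =
      a i j * balancedCoeff a m := by
  have e : Finsupp.sumFinsuppAddEquivProdFinsupp
      (Finsupp.single (Sum.inl i) 1 + Finsupp.single (Sum.inr j) 1 : ι ⊕ ι →₀ ℕ) =
      (Finsupp.single i 1, Finsupp.single j 1) := by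
    classical
    ext k <;> simp [Finsupp.single_apply]
  simp only [balancedCoeff, map_add _ (_ + _) m, e]
  generalize Finsupp.sumFinsuppAddEquivProdFinsupp m = p
  simp only [Prod.fst_add, Prod.snd_add, map_add, Finsupp.toMultiset_single, one_smul,
    Multiset.singleton_add, Multiset.card_cons, add_left_inj]
  generalize p.1.toMultiset = s
  generalize p.2.toMultiset = t
  split_ifs with h
  · have hs : (i ::ₘ s).toList.Perm (i :: s.toList) := by
      rw [← Multiset.coe_eq_coe]; simp [← Multiset.cons_coe]
    have ht : (j ::ₘ t).toList.Perm (j :: t.toList) := by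
      rw [← Multiset.coe_eq_coe]; simp [← Multiset.cons_coe]
    rw [pairProd_perm_left ha hs _ (by simp [h]), pairProd_perm_right ha ht _ (by simp [h])]
    simp [pairProd]
  · simp

variable [Algebra ℂ R]

/-- The `ℂ`-linear map `ψ : ℂ[x, y] → R` with values `balancedCoeff a` on monomials. -/
def unSpringer (a : ι → ι → R) : MvPolynomial (ι ⊕ ι) ℂ →ₗ[ℂ] R :=
  (basisMonomials (ι ⊕ ι) ℂ).constr ℂ (balancedCoeff a)

lemma unSpringer_monomial (m : ι ⊕ ι →₀ ℕ) :
    unSpringer a (monomial m 1) = balancedCoeff a m := by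
  simpa [unSpringer] using (basisMonomials (ι ⊕ ι) ℂ).constr_basis ℂ (balancedCoeff a) m

lemma unSpringer_X_mul (ha : ∀ i j k l, a i j * a k l = a i l * a k j) (i j : ι)
    (g : MvPolynomial (ι ⊕ ι) ℂ) :
    unSpringer a (X (Sum.inl i) * X (Sum.inr j) * g) = a i j * unSpringer a g := by
  suffices h : unSpringer a ∘ₗ LinearMap.mulLeft ℂ (X (Sum.inl i) * X (Sum.inr j)) =
      LinearMap.mulLeft ℂ (a i j) ∘ₗ unSpringer a from LinearMap.congr_fun h g
  refine (basisMonomials (ι ⊕ ι) ℂ).ext fun m => ?_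
  simp only [coe_basisMonomials, LinearMap.comp_apply, LinearMap.mulLeft_apply, X, monomial_mul,
    mul_one, unSpringer_monomial, balancedCoeff_add ha]

/-- `ψ` is linear over `ℂ[z]`, which acts on `ℂ[x, y]` through `z_{ij} ↦ x_i y_j` and on `R`
through `z_{ij} ↦ a i j`. -/
lemma unSpringer_lift_mul (ha : ∀ i j k l, a i j * a k l = a i l * a k j)
    (q : MvPolynomial (ι × ι) ℂ) : ∀ g : MvPolynomial (ι ⊕ ι) ℂ,
    unSpringer a (aeval (fun p : ι × ι => X (Sum.inl p.1) * X (Sum.inr p.2)) q * g) =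
      aeval (fun p : ι × ι => a p.1 p.2) q * unSpringer a g := by
  induction q using MvPolynomial.induction_on with
  | C c =>
    intro g
    simp only [← algebraMap_eq, AlgHom.commutes, ← Algebra.smul_def, map_smul]
  | add p q hp hq => intro g; simp only [map_add, add_mul, hp, hq]
  | mul_X p x hp =>
    intro g
    rw [map_mul (aeval _), map_mul (aeval _), aeval_X, aeval_X, mul_assoc, hp,
      unSpringer_X_mul ha, mul_assoc]

end pairing

/-- Identification of `Z_{ℙⁿ} = Spec S(ℙⁿ)` with the minimal nilpotent orbit closure in
`sl_{n+1}`: the kernel of `z_{ij} ↦ class of xᵢ·yⱼ` is generated by the trace and the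
`2×2` minors. -/
theorem stmt6 (n : ℕ) (hn : 1 ≤ n) :
    RingHom.ker (springerHom n) =
      Ideal.span
        ({∑ i : Fin (n + 1), X (i, i)} ∪
         {q : MvPolynomial (Fin (n + 1) × Fin (n + 1)) ℂ |
            ∃ i j k l : Fin (n + 1),
              q = X (i, j) * X (k, l) - X (i, l) * X (k, j)}) := by
  set J := Ideal.span
        ({∑ i : Fin (n + 1), X (i, i)} ∪
         {q : MvPolynomial (Fin (n + 1) × Fin (n + 1)) ℂ |
            ∃ i j k l : Fin (n + 1),
              q = X (i, j) * X (k, l) - X (i, l) * X (k, j)}) with hJ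
  let φ : MvPolynomial (Fin (n + 1) × Fin (n + 1)) ℂ →ₐ[ℂ]
      MvPolynomial (Fin (n + 1) ⊕ Fin (n + 1)) ℂ :=
    aeval fun p => X (Sum.inl p.1) * X (Sum.inr p.2)
  have hφ : ∀ f, springerHom n f = Ideal.Quotient.mk (hypIdeal n) (φ f) := by
    intro f
    have : springerHom n = (Ideal.Quotient.mkₐ ℂ (hypIdeal n)).comp φ := by
      apply algHom_ext
      intro p
      simp [springerHom, φ]
    rw [this]
    rfl
  have hφtr : φ (∑ i : Fin (n + 1), X (i, i)) =
      ∑ i : Fin (n + 1), X (Sum.inl i) * X (Sum.inr i) := by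
    simp [φ]
  apply le_antisymm
  · intro f hf
    rw [RingHom.mem_ker, hφ, Ideal.Quotient.eq_zero_iff_mem, hypIdeal,
      Ideal.mem_span_singleton] at hf
    obtain ⟨g, hg⟩ := hf
    let a : Fin (n + 1) → Fin (n + 1) → MvPolynomial (Fin (n + 1) × Fin (n + 1)) ℂ ⧸ J :=
      fun i j => Ideal.Quotient.mk J (X (i, j))
    have ha : ∀ i j k l, a i j * a k l = a i l * a k j := by
      intro i j k l
      simp only [a, ← map_mul]
      rw [Ideal.Quotient.eq]
      exact Ideal.subset_span (Or.inr ⟨i, j, k, l, rfl⟩)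
    have hmk : ∀ q, aeval (fun p : Fin (n + 1) × Fin (n + 1) => a p.1 p.2) q =
        Ideal.Quotient.mk J q := by
      intro q
      have : aeval (fun p : Fin (n + 1) × Fin (n + 1) => a p.1 p.2) =
          Ideal.Quotient.mkₐ ℂ J := by
        apply algHom_ext
        intro p
        simp [a]
      rw [this]
      rfl
    have h1 : unSpringer a 1 = 1 := by
      rw [← balancedCoeff_zero (a := a), ← unSpringer_monomial]
      rfl
    have htr : Ideal.Quotient.mk J (∑ i : Fin (n + 1), X (i, i)) = 0 :=
      Ideal.Quotient.eq_zero_iff_mem.2 (Ideal.subset_span (Or.inl rfl))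
    have hf1 := unSpringer_lift_mul ha f 1
    have hf2 := unSpringer_lift_mul ha (∑ i : Fin (n + 1), X (i, i)) g
    rw [hmk, h1, mul_one, mul_one] at hf1
    rw [hmk, htr, zero_mul] at hf2
    rw [← Ideal.Quotient.eq_zero_iff_mem, ← hf1, ← hf2]
    change unSpringer a (φ f) = unSpringer a (φ _ * g)
    rw [hφtr, hg]
  · rw [hJ, Ideal.span_le]
    rintro q (rfl | ⟨i, j, k, l, rfl⟩)
    · rw [SetLike.mem_coe, RingHom.mem_ker, hφ, hφtr, Ideal.Quotient.eq_zero_iff_mem]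
      exact Ideal.subset_span rfl
    · rw [SetLike.mem_coe, RingHom.mem_ker, hφ]
      have : φ (X (i, j) * X (k, l) - X (i, l) * X (k, j)) = 0 := by
        simp only [φ, map_sub, map_mul, aeval_X]
        ring
      rw [this, map_zero]

end
end

section
/- The ℂ-linear span in Q′ of the classes of all monomials of weight (0,0) equals (as a ℂ-submodule) the ℂ-subalgebra of Q′ generated by the classes of the monomials x_i·y_j (1 ≤ i, j ≤ n), x_i·y_{n+1}·x_{n+2} (1 ≤ i ≤ n), and y_i·x_{n+1}·y_{n+2} (1 ≤ i ≤ n). (Paper's claim in Section 4.4: the coordinate ring of Φ⁻¹(0)//𝕋², i.e. of Z_X for X the blow-up of ℙⁿ at a point, is generated by these monomials.) -/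
/-!
A monomial of weight zero has `p` more factors `xᵢ` than factors `yᵢ` (`i ≤ n`), `p` more
`y_{n+1}` than `x_{n+1}` and `p` more `x_{n+2}` than `y_{n+2}`, for one integer `p`
(`mwt_eq_zero_iff`). Hence, unless it is `1`, it is divisible by one of `xᵢyⱼ`,
`x_{n+1}y_{n+1}`, `x_{n+2}y_{n+2}`, `xᵢy_{n+1}x_{n+2}`, `yᵢx_{n+1}y_{n+2}`. Each of these has
weight zero and its class lies in the subalgebra: the second and third are `∓∑ xᵢyᵢ`
modulo `f₁` and `f₂`. Induction on the degree gives one inclusion (`mk_mon_mem`). For the other,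
the span of the weight-zero monomials is closed under products, since weights add, and it contains
the generators.
-/

open scoped BigOperators
open MvPolynomial

noncomputable section

/-- Embedding of the first `n` indices into `Fin (n+2)` (the variables `x₁,…,x_n`). -/
def emb (n : ℕ) (i : Fin n) : Fin (n + 2) := Fin.castLE (by omega) i

/-- The index of `x_{n+1}`. -/
def idxA (n : ℕ) : Fin (n + 2) := ⟨n, by omega⟩

/-- The index of `x_{n+2}`. -/
def idxB (n : ℕ) : Fin (n + 2) := ⟨n + 1, by omega⟩

/-- `f₁ = Σ_{i=1}^n xᵢyᵢ + x_{n+1}y_{n+1}`. -/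
def f1 (n : ℕ) : MvPolynomial (Fin (n + 2) ⊕ Fin (n + 2)) ℂ :=
  (∑ i : Fin n, X (Sum.inl (emb n i)) * X (Sum.inr (emb n i))) +
    X (Sum.inl (idxA n)) * X (Sum.inr (idxA n))

/-- `f₂ = −Σ_{i=1}^n xᵢyᵢ + x_{n+2}y_{n+2}`. -/
def f2 (n : ℕ) : MvPolynomial (Fin (n + 2) ⊕ Fin (n + 2)) ℂ :=
  (-∑ i : Fin n, X (Sum.inl (emb n i)) * X (Sum.inr (emb n i))) +
    X (Sum.inl (idxB n)) * X (Sum.inr (idxB n))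

/-- The ideal `(f₁, f₂)` cutting out the zero fibre of the moment map. -/
def momIdeal (n : ℕ) : Ideal (MvPolynomial (Fin (n + 2) ⊕ Fin (n + 2)) ℂ) :=
  Ideal.span {f1 n, f2 n}

/-- The `ℤ²`-weight of the variable `xᵢ` under the `𝕋²`-action. -/
def wtx (n : ℕ) (i : Fin (n + 2)) : ℤ × ℤ :=
  if (i : ℕ) < n then (1, -1) else if (i : ℕ) = n then (1, 0) else (0, 1)

/-- The `ℤ²`-weight of the monomial with exponent vector `e` (the variables `yᵢ` have
weight `−wt(xᵢ)`). -/
def mwt (n : ℕ) (e : Fin (n + 2) ⊕ Fin (n + 2) → ℕ) : ℤ × ℤ :=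
  (∑ i : Fin (n + 2), (e (Sum.inl i) : ℤ) • wtx n i) -
    ∑ i : Fin (n + 2), (e (Sum.inr i) : ℤ) • wtx n i

/-- The monomial with exponent vector `e`. -/
def mon (n : ℕ) (e : Fin (n + 2) ⊕ Fin (n + 2) → ℕ) :
    MvPolynomial (Fin (n + 2) ⊕ Fin (n + 2)) ℂ :=
  ∏ i : Fin (n + 2) ⊕ Fin (n + 2), X i ^ e i

lemma mon_zero (n : ℕ) : mon n 0 = 1 := by simp [mon]

lemma mon_add (n : ℕ) (d e : Fin (n + 2) ⊕ Fin (n + 2) → ℕ) :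
    mon n (d + e) = mon n d * mon n e := by
  simp [mon, pow_add, Finset.prod_mul_distrib]

lemma mon_single (n : ℕ) (u : Fin (n + 2) ⊕ Fin (n + 2)) :
    mon n (Pi.single u 1) = X u := by
  unfold mon
  rw [Finset.prod_eq_single u]
  · simp
  · intro b _ hb
    simp [hb]
  · simp

lemma mwt_zero (n : ℕ) : mwt n 0 = 0 := by simp [mwt]

lemma mwt_add (n : ℕ) (d e : Fin (n + 2) ⊕ Fin (n + 2) → ℕ) :
    mwt n (d + e) = mwt n d + mwt n e := by
  simp only [mwt, Pi.add_apply, Nat.cast_add, add_smul, Finset.sum_add_distrib]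
  abel

lemma mwt_single_inl (n : ℕ) (i : Fin (n + 2)) :
    mwt n (Pi.single (Sum.inl i) 1) = wtx n i := by
  simp [mwt, Pi.single_apply]

lemma mwt_single_inr (n : ℕ) (i : Fin (n + 2)) :
    mwt n (Pi.single (Sum.inr i) 1) = - wtx n i := by
  simp [mwt, Pi.single_apply]

lemma wtx_emb (n : ℕ) (i : Fin n) : wtx n (emb n i) = (1, -1) := by simp [wtx, emb]
lemma wtx_idxA (n : ℕ) : wtx n (idxA n) = (1, 0) := by simp [wtx, idxA]
lemma wtx_idxB (n : ℕ) : wtx n (idxB n) = (0, 1) := by simp [wtx, idxB]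

lemma sum_fin_add_two {M : Type*} [AddCommMonoid M] (n : ℕ) (f : Fin (n + 2) → M) :
    ∑ i, f i = (∑ i : Fin n, f (emb n i)) + f (idxA n) + f (idxB n) := by
  rw [Fin.sum_univ_castSucc, Fin.sum_univ_castSucc]
  rfl

lemma idx_cases (n : ℕ) (i : Fin (n + 2)) :
    (∃ j, i = emb n j) ∨ i = idxA n ∨ i = idxB n := by
  rcases i with ⟨i, hi⟩
  by_cases h : i < n
  · exact Or.inl ⟨⟨i, h⟩, rfl⟩
  · by_cases h' : i = n
    · exact Or.inr (Or.inl (Fin.ext h'))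
    · exact Or.inr (Or.inr (Fin.ext (show i = n + 1 by omega)))

lemma mwt_eq_zero_iff (n : ℕ) (e : Fin (n + 2) ⊕ Fin (n + 2) → ℕ) :
    mwt n e = 0 ↔
      (∑ i : Fin n, e (Sum.inl (emb n i))) + e (Sum.inl (idxA n)) =
          (∑ i : Fin n, e (Sum.inr (emb n i))) + e (Sum.inr (idxA n)) ∧
      (∑ i : Fin n, e (Sum.inl (emb n i))) + e (Sum.inr (idxB n)) =
          (∑ i : Fin n, e (Sum.inr (emb n i))) + e (Sum.inl (idxB n)) := by
  have h : mwt n e =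
      ((((∑ i : Fin n, e (Sum.inl (emb n i)) : ℕ) : ℤ) + e (Sum.inl (idxA n))) -
        (((∑ i : Fin n, e (Sum.inr (emb n i)) : ℕ) : ℤ) + e (Sum.inr (idxA n))),
       (-((∑ i : Fin n, e (Sum.inl (emb n i)) : ℕ) : ℤ) + e (Sum.inl (idxB n))) -
        (-((∑ i : Fin n, e (Sum.inr (emb n i)) : ℕ) : ℤ) + e (Sum.inr (idxB n)))) := by
    simp only [mwt, sum_fin_add_two, wtx_emb, wtx_idxA, wtx_idxB, ← Finset.sum_smul,
      ← Nat.cast_sum]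
    ext <;> simp
  rw [h, Prod.ext_iff]
  simp only [Prod.fst_zero, Prod.snd_zero]
  omega

lemma exists_eq_single_add (n : ℕ) (e : Fin (n + 2) ⊕ Fin (n + 2) → ℕ)
    (u : Fin (n + 2) ⊕ Fin (n + 2)) (hu : 0 < e u) :
    ∃ d : Fin (n + 2) ⊕ Fin (n + 2) → ℕ, e = Pi.single u 1 + d ∧ ∀ v, v ≠ u → d v = e v := by
  refine ⟨e - Pi.single u 1, ?_, fun v hv => by simp [hv]⟩
  funext v
  by_cases hv : v = u
  · subst hv
    simp
    omega
  · simp [hv]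

/-- A subalgebra of the quotient that contains the classes of the five kinds of weight-zero
products contains every weight-zero monomial. -/
lemma mk_mon_mem (n : ℕ)
    (S : Subalgebra ℂ (MvPolynomial (Fin (n + 2) ⊕ Fin (n + 2)) ℂ ⧸ momIdeal n))
    (hxy : ∀ i j : Fin n, Ideal.Quotient.mk (momIdeal n)
      (X (Sum.inl (emb n i)) * X (Sum.inr (emb n j))) ∈ S)
    (hA : Ideal.Quotient.mk (momIdeal n)
      (X (Sum.inl (idxA n)) * X (Sum.inr (idxA n))) ∈ S)
    (hB : Ideal.Quotient.mk (momIdeal n)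
      (X (Sum.inl (idxB n)) * X (Sum.inr (idxB n))) ∈ S)
    (hx : ∀ i : Fin n, Ideal.Quotient.mk (momIdeal n)
      (X (Sum.inl (emb n i)) * X (Sum.inr (idxA n)) * X (Sum.inl (idxB n))) ∈ S)
    (hy : ∀ i : Fin n, Ideal.Quotient.mk (momIdeal n)
      (X (Sum.inr (emb n i)) * X (Sum.inl (idxA n)) * X (Sum.inr (idxB n))) ∈ S)
    (k : ℕ) : ∀ e : Fin (n + 2) ⊕ Fin (n + 2) → ℕ, ∑ v, e v = k → mwt n e = 0 →
      Ideal.Quotient.mk (momIdeal n) (mon n e) ∈ S := by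
  induction k using Nat.strong_induction_on with
  | _ k ih =>
  intro e hk he
  -- Splitting off a weight-zero factor whose class is in `S`.
  have two : ∀ u v, u ≠ v → mwt n (Pi.single u 1) + mwt n (Pi.single v 1) = 0 →
      Ideal.Quotient.mk (momIdeal n) (X u * X v) ∈ S → 0 < e u → 0 < e v →
      Ideal.Quotient.mk (momIdeal n) (mon n e) ∈ S := by
    intro u v huv hw hS hu hv
    obtain ⟨d, rfl, hd⟩ := exists_eq_single_add n e u hu
    rw [← hd v huv.symm] at hv
    obtain ⟨d, rfl, -⟩ := exists_eq_single_add n d v hv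
    rw [← add_assoc, mon_add, mon_add, mon_single, mon_single, map_mul]
    refine S.mul_mem hS (ih _ ?_ d rfl ?_)
    · simp only [Pi.add_apply, Finset.sum_add_distrib, Finset.sum_pi_single', Finset.mem_univ,
        if_true] at hk
      omega
    · rw [← add_assoc, mwt_add, mwt_add, hw, zero_add] at he
      exact he
  have three : ∀ u v w, u ≠ v → u ≠ w → v ≠ w →
      mwt n (Pi.single u 1) + mwt n (Pi.single v 1) + mwt n (Pi.single w 1) = 0 →
      Ideal.Quotient.mk (momIdeal n) (X u * X v * X w) ∈ S → 0 < e u → 0 < e v → 0 < e w →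
      Ideal.Quotient.mk (momIdeal n) (mon n e) ∈ S := by
    intro u v w huv huw hvw hwt hS hu hv hw
    obtain ⟨d, rfl, hd⟩ := exists_eq_single_add n e u hu
    rw [← hd v huv.symm] at hv
    rw [← hd w huw.symm] at hw
    obtain ⟨d, rfl, hd⟩ := exists_eq_single_add n d v hv
    rw [← hd w hvw.symm] at hw
    obtain ⟨d, rfl, -⟩ := exists_eq_single_add n d w hw
    rw [← add_assoc, ← add_assoc, mon_add, mon_add, mon_add, mon_single, mon_single, mon_single,
      map_mul]
    refine S.mul_mem hS (ih _ ?_ d rfl ?_)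
    · simp only [Pi.add_apply, Finset.sum_add_distrib, Finset.sum_pi_single', Finset.mem_univ,
        if_true] at hk
      omega
    · rw [← add_assoc, ← add_assoc, mwt_add, mwt_add, mwt_add, hwt, zero_add] at he
      exact he
  have hAB : idxA n ≠ idxB n := by simp [idxA, idxB]
  have heA : ∀ i, emb n i ≠ idxA n := fun i h => by
    have := congrArg Fin.val h
    simp [emb, idxA] at this
    omega
  have heB : ∀ i, emb n i ≠ idxB n := fun i h => by
    have := congrArg Fin.val h
    simp [emb, idxB] at this
    omega
  by_cases cA : 0 < e (Sum.inl (idxA n)) ∧ 0 < e (Sum.inr (idxA n))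
  · exact two _ _ (by simp) (by simp [mwt_single_inl, mwt_single_inr]) hA cA.1 cA.2
  by_cases cB : 0 < e (Sum.inl (idxB n)) ∧ 0 < e (Sum.inr (idxB n))
  · exact two _ _ (by simp) (by simp [mwt_single_inl, mwt_single_inr]) hB cB.1 cB.2
  have hwt := (mwt_eq_zero_iff n e).1 he
  by_cases cx : ∃ i, 0 < e (Sum.inl (emb n i))
  · obtain ⟨i, hi⟩ := cx
    by_cases cy : ∃ j, 0 < e (Sum.inr (emb n j))
    · obtain ⟨j, hj⟩ := cy
      exact two _ _ (by simp) (by simp [mwt_single_inl, mwt_single_inr, wtx_emb]) (hxy i j) hi hj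
    · push Not at cy
      have hs : ∑ j, e (Sum.inr (emb n j)) = 0 :=
        Finset.sum_eq_zero fun j _ => Nat.le_zero.1 (cy j)
      have hp : e (Sum.inl (emb n i)) ≤ ∑ j, e (Sum.inl (emb n j)) :=
        Finset.single_le_sum (f := fun j => e (Sum.inl (emb n j)))
          (fun _ _ => Nat.zero_le _) (Finset.mem_univ i)
      exact three _ _ _ (by simp) (by simpa using heB i) (by simp)
        (by simp [mwt_single_inl, mwt_single_inr, wtx_emb, wtx_idxA, wtx_idxB]) (hx i) hi
        (by omega) (by omega)
  · push Not at cx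
    have hs : ∑ j, e (Sum.inl (emb n j)) = 0 :=
      Finset.sum_eq_zero fun j _ => Nat.le_zero.1 (cx j)
    by_cases cy : ∃ j, 0 < e (Sum.inr (emb n j))
    · obtain ⟨i, hi⟩ := cy
      have hp : e (Sum.inr (emb n i)) ≤ ∑ j, e (Sum.inr (emb n j)) :=
        Finset.single_le_sum (f := fun j => e (Sum.inr (emb n j)))
          (fun _ _ => Nat.zero_le _) (Finset.mem_univ i)
      exact three _ _ _ (by simp) (by simpa using heB i) (by simp)
        (by simp [mwt_single_inl, mwt_single_inr, wtx_emb, wtx_idxA, wtx_idxB]) (hy i) hi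
        (by omega) (by omega)
    · push Not at cy
      have hs' : ∑ j, e (Sum.inr (emb n j)) = 0 :=
        Finset.sum_eq_zero fun j _ => Nat.le_zero.1 (cy j)
      have h0 : e = 0 := by
        funext v
        rw [Pi.zero_apply]
        rcases v with v | v <;> rcases idx_cases n v with ⟨j, rfl⟩ | rfl | rfl
        · exact Nat.le_zero.1 (cx j)
        · omega
        · omega
        · exact Nat.le_zero.1 (cy j)
        · omega
        · omega
      rw [h0, mon_zero, map_one]
      exact S.one_mem

/-- Paper's claim in Section 4.4: the weight-`(0,0)` part of the coordinate ring of
`Φ⁻¹(0)`, i.e. the coordinate ring of `Z_X` for `X` the blow-up of `ℙⁿ` at a point, is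
generated by the monomials `xᵢyⱼ (i,j ≤ n)`, `xᵢy_{n+1}x_{n+2} (i ≤ n)` and
`yᵢx_{n+1}y_{n+2} (i ≤ n)`. -/
theorem stmt7 (n : ℕ) (hn : 2 ≤ n) :
    Submodule.span ℂ
      {q : MvPolynomial (Fin (n + 2) ⊕ Fin (n + 2)) ℂ ⧸ momIdeal n |
        ∃ e : Fin (n + 2) ⊕ Fin (n + 2) → ℕ, mwt n e = 0 ∧
          q = Ideal.Quotient.mk (momIdeal n) (∏ i : Fin (n + 2) ⊕ Fin (n + 2), X i ^ e i)} =
    Subalgebra.toSubmodule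
      (Algebra.adjoin ℂ
        ({q : MvPolynomial (Fin (n + 2) ⊕ Fin (n + 2)) ℂ ⧸ momIdeal n |
            ∃ i j : Fin n, q = Ideal.Quotient.mk (momIdeal n)
              (X (Sum.inl (emb n i)) * X (Sum.inr (emb n j)))} ∪
         {q : MvPolynomial (Fin (n + 2) ⊕ Fin (n + 2)) ℂ ⧸ momIdeal n |
            ∃ i : Fin n, q = Ideal.Quotient.mk (momIdeal n)
              (X (Sum.inl (emb n i)) * X (Sum.inr (idxA n)) * X (Sum.inl (idxB n)))} ∪
         {q : MvPolynomial (Fin (n + 2) ⊕ Fin (n + 2)) ℂ ⧸ momIdeal n |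
            ∃ i : Fin n, q = Ideal.Quotient.mk (momIdeal n)
              (X (Sum.inr (emb n i)) * X (Sum.inl (idxA n)) * X (Sum.inr (idxB n)))})) := by
  apply le_antisymm
  · rw [Submodule.span_le]
    rintro q ⟨e, he, rfl⟩
    rw [SetLike.mem_coe, Subalgebra.mem_toSubmodule]
    generalize hG : Algebra.adjoin ℂ (A := MvPolynomial _ ℂ ⧸ momIdeal n) _ = S
    have hxy : ∀ i j : Fin n, Ideal.Quotient.mk (momIdeal n)
        (X (Sum.inl (emb n i)) * X (Sum.inr (emb n j))) ∈ S := fun i j =>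
      hG ▸ Algebra.subset_adjoin (Or.inl (Or.inl ⟨i, j, rfl⟩))
    refine mk_mon_mem n S hxy ?_ ?_ (fun i => hG ▸ Algebra.subset_adjoin (Or.inl (Or.inr ⟨i, rfl⟩)))
      (fun i => hG ▸ Algebra.subset_adjoin (Or.inr ⟨i, rfl⟩)) _ e rfl he
    · have h : Ideal.Quotient.mk (momIdeal n) (f1 n) = 0 :=
        Ideal.Quotient.eq_zero_iff_mem.2 (Ideal.subset_span (by simp))
      rw [f1, map_add, map_sum] at h
      rw [eq_neg_of_add_eq_zero_right h]
      exact neg_mem (sum_mem fun i _ => hxy i i)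
    · have h : Ideal.Quotient.mk (momIdeal n) (f2 n) = 0 :=
        Ideal.Quotient.eq_zero_iff_mem.2 (Ideal.subset_span (by simp))
      rw [f2, map_add, map_neg, map_sum] at h
      rw [eq_neg_of_add_eq_zero_right h, neg_neg]
      exact sum_mem fun i _ => hxy i i
  · intro q hq
    rw [Subalgebra.mem_toSubmodule] at hq
    induction hq using Algebra.adjoin_induction with
    | mem q hq =>
      apply Submodule.subset_span
      rcases hq with (⟨i, j, rfl⟩ | ⟨i, rfl⟩) | ⟨i, rfl⟩
      · refine ⟨Pi.single (Sum.inl (emb n i)) 1 + Pi.single (Sum.inr (emb n j)) 1, ?_, ?_⟩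
        · simp [mwt_add, mwt_single_inl, mwt_single_inr, wtx_emb]
        · rw [← mon_single, ← mon_single, ← mon_add]
          rfl
      · refine ⟨Pi.single (Sum.inl (emb n i)) 1 + Pi.single (Sum.inr (idxA n)) 1 +
          Pi.single (Sum.inl (idxB n)) 1, ?_, ?_⟩
        · simp [mwt_add, mwt_single_inl, mwt_single_inr, wtx_emb, wtx_idxA, wtx_idxB]
        · rw [← mon_single, ← mon_single, ← mon_single, ← mon_add, ← mon_add]
          rfl
      · refine ⟨Pi.single (Sum.inr (emb n i)) 1 + Pi.single (Sum.inl (idxA n)) 1 +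
          Pi.single (Sum.inr (idxB n)) 1, ?_, ?_⟩
        · simp [mwt_add, mwt_single_inl, mwt_single_inr, wtx_emb, wtx_idxA, wtx_idxB]
        · rw [← mon_single, ← mon_single, ← mon_single, ← mon_add, ← mon_add]
          rfl
    | algebraMap r =>
      rw [Algebra.algebraMap_eq_smul_one]
      refine Submodule.smul_mem _ _ (Submodule.subset_span ⟨0, mwt_zero n, ?_⟩)
      simp
    | add a b _ _ ha hb => exact add_mem ha hb
    | mul a b _ _ ha hb =>
      have hab := Submodule.mul_mem_mul ha hb
      rw [Submodule.span_mul_span] at hab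
      refine Submodule.span_mono ?_ hab
      rintro _ ⟨_, ⟨d, hd, rfl⟩, _, ⟨e, he, rfl⟩, rfl⟩
      refine ⟨d + e, by rw [mwt_add, hd, he, add_zero], ?_⟩
      exact ((congrArg _ (mon_add n d e)).trans (map_mul _ _ _)).symm

end
end

section
/- The map ν maps O into 𝒵; moreover, the restriction of ν to the set {z ∈ O : z_{n+1,n+1} ≠ 0} is injective and its image equals {w ∈ 𝒵 : w_{n+1,n+1} ≠ 0}. (Claim (1) of the paper's Section 4.4: ν is an isomorphism outside D₁ ∪ D₂.) -/
/-!
Scaling the last column of a matrix by a scalar `c` is right multiplication by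
`diag(1, …, 1, c)`, so it does not increase the rank. With `t` the last diagonal entry of `z`,
the matrix `M(ν(z))` is `z` with its last column scaled by `-t` (`Mw_nu`), and `ν` does not change
the diagonal; hence `ν` maps `O` into `𝒵`. Where `t ≠ 0` the scaling can be undone: since `ν`
preserves `t`, it is injective there, and `w ∈ 𝒵` with last diagonal entry `t ≠ 0` is the image of
`M(w)` with its last column scaled by `-1/t` (`nu_scaleLast_Mw`), whose diagonal is that of `w`.
-/

open Matrix

noncomputable section

/-- The matrix `M(w)`: agrees with `w` except that its `(n+1,n+1)` entry is
`−(w_{n+1,n+1})²`. -/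
def Mw (n : ℕ) (w : Matrix (Fin (n + 1)) (Fin (n + 1)) ℂ) :
    Matrix (Fin (n + 1)) (Fin (n + 1)) ℂ :=
  Matrix.of fun i j =>
    if i = Fin.last n ∧ j = Fin.last n then -(w (Fin.last n) (Fin.last n)) ^ 2 else w i j

/-- The map `ν` induced by the blow-up `X → ℙⁿ`. -/
def nu (n : ℕ) (z : Matrix (Fin (n + 1)) (Fin (n + 1)) ℂ) :
    Matrix (Fin (n + 1)) (Fin (n + 1)) ℂ :=
  Matrix.of fun i j =>
    if i ≠ Fin.last n ∧ j = Fin.last n then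
      -(z (Fin.last n) (Fin.last n)) * z i (Fin.last n)
    else z i j

/-- The minimal nilpotent orbit closure `O` in `sl_{n+1}`: traceless matrices of rank at
most `1`. -/
def Oset (n : ℕ) : Set (Matrix (Fin (n + 1)) (Fin (n + 1)) ℂ) :=
  {z | z.trace = 0 ∧ z.rank ≤ 1}

/-- The point set `𝒵` of the symplectic variety `Z_X` for `X` the blow-up of `ℙⁿ` at a
point. -/
def Zset (n : ℕ) : Set (Matrix (Fin (n + 1)) (Fin (n + 1)) ℂ) :=
  {w | w.trace = 0 ∧ (Mw n w).rank ≤ 1}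

/-- `D₁`: elements of `O` whose `(n+1)`-st row is zero. -/
def D1 (n : ℕ) : Set (Matrix (Fin (n + 1)) (Fin (n + 1)) ℂ) :=
  {z ∈ Oset n | ∀ j, z (Fin.last n) j = 0}

/-- `D₂`: elements of `O` whose `(n+1)`-st column is zero. -/
def D2 (n : ℕ) : Set (Matrix (Fin (n + 1)) (Fin (n + 1)) ℂ) :=
  {z ∈ Oset n | ∀ i, z i (Fin.last n) = 0}

/-- `𝒮`: the singular locus of `𝒵`. -/
def Sset (n : ℕ) : Set (Matrix (Fin (n + 1)) (Fin (n + 1)) ℂ) :=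
  {w | (∀ j, w (Fin.last n) j = 0) ∧ (∀ i, w i (Fin.last n) = 0) ∧
    w.trace = 0 ∧ w.rank ≤ 1}

/-- `𝒲`: elements of `𝒵` whose `(n+1)`-st row is zero. -/
def Wset (n : ℕ) : Set (Matrix (Fin (n + 1)) (Fin (n + 1)) ℂ) :=
  {w ∈ Zset n | ∀ j, w (Fin.last n) j = 0}

/-- The matrix `z` with its last column multiplied by `c`, written as a product with the
diagonal matrix `diag(1, …, 1, c)`. -/
def scaleLast (n : ℕ) (c : ℂ) (z : Matrix (Fin (n + 1)) (Fin (n + 1)) ℂ) :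
    Matrix (Fin (n + 1)) (Fin (n + 1)) ℂ :=
  z * Matrix.diagonal fun j => if j = Fin.last n then c else 1

lemma scaleLast_apply (n : ℕ) (c : ℂ) (z : Matrix (Fin (n + 1)) (Fin (n + 1)) ℂ)
    (i j : Fin (n + 1)) :
    scaleLast n c z i j = z i j * if j = Fin.last n then c else 1 := by
  simp [scaleLast, Matrix.mul_diagonal]

lemma rank_scaleLast_le (n : ℕ) (c : ℂ) (z : Matrix (Fin (n + 1)) (Fin (n + 1)) ℂ) :
    (scaleLast n c z).rank ≤ z.rank :=
  Matrix.rank_mul_le_left _ _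

lemma nu_apply_self (n : ℕ) (z : Matrix (Fin (n + 1)) (Fin (n + 1)) ℂ) (i : Fin (n + 1)) :
    nu n z i i = z i i := by
  by_cases h : i = Fin.last n <;> simp [nu, h]

lemma trace_nu (n : ℕ) (z : Matrix (Fin (n + 1)) (Fin (n + 1)) ℂ) :
    (nu n z).trace = z.trace := by
  simp [Matrix.trace, nu_apply_self]

lemma Mw_nu (n : ℕ) (z : Matrix (Fin (n + 1)) (Fin (n + 1)) ℂ) :
    Mw n (nu n z) = scaleLast n (-z (Fin.last n) (Fin.last n)) z := by
  ext i j
  rw [scaleLast_apply]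
  by_cases hi : i = Fin.last n <;> by_cases hj : j = Fin.last n <;>
    simp [Mw, nu, hi, hj] <;> ring

lemma nu_scaleLast_Mw (n : ℕ) (w : Matrix (Fin (n + 1)) (Fin (n + 1)) ℂ)
    (hw : w (Fin.last n) (Fin.last n) ≠ 0) :
    nu n (scaleLast n (-(w (Fin.last n) (Fin.last n))⁻¹) (Mw n w)) = w := by
  ext i j
  by_cases hi : i = Fin.last n <;> by_cases hj : j = Fin.last n <;>
    simp [Mw, nu, hi, hj, scaleLast_apply] <;> field_simp

lemma nu_mem_Zset (n : ℕ) {z : Matrix (Fin (n + 1)) (Fin (n + 1)) ℂ} (hz : z ∈ Oset n) :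
    nu n z ∈ Zset n :=
  ⟨(trace_nu n z).trans hz.1, by
    rw [Mw_nu]
    exact (rank_scaleLast_le _ _ _).trans hz.2⟩

lemma nu_injOn (n : ℕ) :
    Set.InjOn (nu n) {z ∈ Oset n | z (Fin.last n) (Fin.last n) ≠ 0} := by
  rintro z ⟨-, hz⟩ z' - h
  have ht : z (Fin.last n) (Fin.last n) = z' (Fin.last n) (Fin.last n) := by
    rw [← nu_apply_self n z, h, nu_apply_self]
  ext i j
  have hij := congrFun (congrFun h i) j
  by_cases hc : i ≠ Fin.last n ∧ j = Fin.last n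
  · obtain ⟨hi, rfl⟩ := hc
    simp only [nu, Matrix.of_apply, ne_eq, hi, not_false_eq_true, and_self, if_true, ← ht] at hij
    exact mul_left_cancel₀ (neg_ne_zero.mpr hz) hij
  · simpa only [nu, Matrix.of_apply, if_neg hc] using hij

/-- Claim (1) of the paper's Section 4.4: `ν` maps `O` into `𝒵`, and `ν` is an
isomorphism outside `D₁ ∪ D₂ = {z_{n+1,n+1} = 0}`: it is injective on
`{z ∈ O : z_{n+1,n+1} ≠ 0}` with image `{w ∈ 𝒵 : w_{n+1,n+1} ≠ 0}`. -/
theorem stmt9 (n : ℕ) (hn : 2 ≤ n) :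
    (∀ z ∈ Oset n, nu n z ∈ Zset n) ∧
    Set.InjOn (nu n) {z ∈ Oset n | z (Fin.last n) (Fin.last n) ≠ 0} ∧
    nu n '' {z ∈ Oset n | z (Fin.last n) (Fin.last n) ≠ 0} =
      {w ∈ Zset n | w (Fin.last n) (Fin.last n) ≠ 0} := by
  refine ⟨fun z hz => nu_mem_Zset n hz, nu_injOn n, Set.Subset.antisymm ?_ ?_⟩
  · rintro _ ⟨z, ⟨hz, ht⟩, rfl⟩
    exact ⟨nu_mem_Zset n hz, by rwa [nu_apply_self]⟩
  · rintro w ⟨⟨htr, hrk⟩, ht⟩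
    have hw := nu_scaleLast_Mw n w ht
    refine ⟨_, ⟨⟨?_, (rank_scaleLast_le _ _ _).trans hrk⟩, ?_⟩, hw⟩
    · rw [← trace_nu, hw, htr]
    · rwa [← nu_apply_self n (scaleLast _ _ _), hw]

end
end

section
/- The image ν(D₁) equals 𝒮. Moreover, for every s ∈ 𝒮 with s ≠ 0 there is a bijection between the fibre {z ∈ D₁ : ν(z) = s} and ℂ, and there is a bijection between the fibre {z ∈ D₁ : ν(z) = 0} and ℂⁿ. (Claim (2) of the paper's Section 4.4: ν(D₁) is the singular locus of 𝒵, with fibres 𝔸¹ outside the origin and 𝔸ⁿ over the origin.) -/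
/-!
If the last row of `z` vanishes, then `ν` only replaces the last column of `z` by zero
(`nu_eq_updateCol`). This changes neither the trace, since the diagonal entry in that column is
already zero (`trace_congr_of_row`), nor the bound `rank ≤ 1`, since `u vᵀ` becomes `u v'ᵀ`.
So `ν` maps `D₁` into `𝒮`. As `𝒮 ⊆ D₁` and `ν` is the identity on `𝒮`, the image is `𝒮`.

The fibre over `s ∈ 𝒮` consists of the matrices obtained from `s` by filling in a last column, with
zero last entry, for which the rank stays at most `1`. If `s ≠ 0`, choose a nonzero entry
`s i₀ j₀`: by the vanishing of `2 × 2` minors (`minor_eq_of_rank_le_one`) the last column must be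
`c` times the `j₀`-th column of `s`, and every `c ∈ ℂ` occurs. If `s = 0`, the first `n` entries of
the last column are arbitrary.
-/

open Matrix

noncomputable section

lemma exists_vecMulVec_of_rank_le_one {m k : Type*} [Fintype m] [Fintype k] [DecidableEq k]
    {A : Matrix m k ℂ} (h : A.rank ≤ 1) : ∃ u v, A = vecMulVec u v := by
  obtain ⟨u, hu⟩ := finrank_le_one_iff.1 h
  choose c hc using fun j => hu ⟨A.mulVecLin (Pi.single j 1), LinearMap.mem_range_self _ _⟩
  refine ⟨u, c, ?_⟩
  ext i j
  have := congrFun (congrArg Subtype.val (hc j)) i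
  simp at this
  rw [vecMulVec_apply, ← this, mul_comm]

lemma minor_eq_of_rank_le_one {m k : Type*} [Fintype m] [Fintype k] [DecidableEq k]
    {A : Matrix m k ℂ} (h : A.rank ≤ 1) (i i' : m) (j j' : k) :
    A i j * A i' j' = A i j' * A i' j := by
  obtain ⟨u, v, rfl⟩ := exists_vecMulVec_of_rank_le_one h
  simp only [vecMulVec_apply]
  ring

/-- Replacing a column by a multiple of some column (the multiple `0` being allowed) preserves
`rank ≤ 1`. -/
lemma rank_updateCol_le_one {m k : Type*} [Fintype m] [Fintype k] [DecidableEq k]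
    {A : Matrix m k ℂ} (h : A.rank ≤ 1) (l j : k) (c : ℂ) :
    (A.updateCol l fun i => c * A i j).rank ≤ 1 := by
  obtain ⟨u, v, rfl⟩ := exists_vecMulVec_of_rank_le_one h
  convert rank_vecMulVec_le u (Function.update v l (c * v j)) using 2
  ext i j'
  by_cases hj : j' = l
  · subst hj
    simp [vecMulVec_apply]
    ring
  · simp [vecMulVec_apply, hj]

lemma trace_congr_of_row {n : ℕ} {z w : Matrix (Fin (n + 1)) (Fin (n + 1)) ℂ}
    (hz : ∀ j, z (Fin.last n) j = 0) (hw : ∀ j, w (Fin.last n) j = 0)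
    (h : ∀ i j, j ≠ Fin.last n → z i j = w i j) : z.trace = w.trace := by
  refine Finset.sum_congr rfl fun i _ => ?_
  by_cases hi : i = Fin.last n
  · subst hi
    simp [hz, hw]
  · exact h i i hi

lemma nu_eq_updateCol {n : ℕ} {z : Matrix (Fin (n + 1)) (Fin (n + 1)) ℂ}
    (hz : ∀ j, z (Fin.last n) j = 0) : nu n z = z.updateCol (Fin.last n) 0 := by
  ext i j
  by_cases hj : j = Fin.last n
  · subst hj
    by_cases hi : i = Fin.last n
    · subst hi
      simp [nu, hz]
    · simp [nu, hz, hi]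
  · simp [nu, hj]

lemma nu_mem_Sset {n : ℕ} {z : Matrix (Fin (n + 1)) (Fin (n + 1)) ℂ} (hz : z ∈ D1 n) :
    nu n z ∈ Sset n := by
  obtain ⟨⟨ht, hr⟩, h0⟩ := hz
  have hrow : ∀ j, z.updateCol (Fin.last n) 0 (Fin.last n) j = 0 := fun j => by
    by_cases hj : j = Fin.last n
    · simp [hj]
    · simp [hj, h0]
  rw [nu_eq_updateCol h0]
  refine ⟨hrow, by simp, ?_, ?_⟩
  · rw [← ht]
    exact trace_congr_of_row hrow h0 fun i j hj => by simp [hj]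
  · convert rank_updateCol_le_one hr (Fin.last n) (Fin.last n) 0 using 3
    ext i
    simp

lemma Sset_subset_D1 {n : ℕ} : Sset n ⊆ D1 n := fun _ hs => ⟨⟨hs.2.2.1, hs.2.2.2⟩, hs.1⟩

/-- Filling in the last column of `s ∈ 𝒮` by `v` gives a point of the fibre over `s`, provided that
`v` has zero last entry and the rank stays at most `1`. -/
lemma updateCol_mem_fibre {n : ℕ} {s : Matrix (Fin (n + 1)) (Fin (n + 1)) ℂ} (hs : s ∈ Sset n)
    {v : Fin (n + 1) → ℂ} (hv : v (Fin.last n) = 0)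
    (hr : (s.updateCol (Fin.last n) v).rank ≤ 1) :
    s.updateCol (Fin.last n) v ∈ {z ∈ D1 n | nu n z = s} := by
  have hrow : ∀ j, s.updateCol (Fin.last n) v (Fin.last n) j = 0 := fun j => by
    by_cases hj : j = Fin.last n
    · simp [hj, hv]
    · simp [hj, hs.1]
  refine ⟨⟨⟨?_, hr⟩, hrow⟩, ?_⟩
  · rw [← hs.2.2.1]
    exact trace_congr_of_row hrow hs.1 fun i j hj => by simp [hj]
  · rw [nu_eq_updateCol hrow]
    ext i j
    by_cases hj : j = Fin.last n
    · simp [hj, hs.2.1]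
    · simp [hj]

lemma apply_of_mem_fibre {n : ℕ} {s z : Matrix (Fin (n + 1)) (Fin (n + 1)) ℂ}
    (hz : z ∈ {z ∈ D1 n | nu n z = s}) (i : Fin (n + 1)) {j : Fin (n + 1)}
    (hj : j ≠ Fin.last n) : z i j = s i j := by
  rw [← hz.2]
  simp [nu, hj]

/-- Claim (2) of the paper's Section 4.4: `ν(D₁)` is the singular locus `𝒮` of `𝒵`, and
the fibres of `ν|_{D₁} : D₁ → 𝒮` are `𝔸¹` outside the origin and `𝔸ⁿ` over the
origin. -/
theorem stmt11 (n : ℕ) (hn : 2 ≤ n) :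
    nu n '' D1 n = Sset n ∧
    (∀ s ∈ Sset n, s ≠ 0 → Nonempty ({z ∈ D1 n | nu n z = s} ≃ ℂ)) ∧
    Nonempty ({z ∈ D1 n | nu n z = 0} ≃ (Fin n → ℂ)) := by
  refine ⟨?_, ?_, ?_⟩
  · ext s
    constructor
    · rintro ⟨z, hz, rfl⟩
      exact nu_mem_Sset hz
    · intro hs
      refine ⟨s, Sset_subset_D1 hs, ?_⟩
      rw [nu_eq_updateCol hs.1]
      ext i j
      by_cases hj : j = Fin.last n
      · simp [hj, hs.2.1]
      · simp [hj]
  · intro s hs hs0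
    obtain ⟨i₀, j₀, h⟩ : ∃ i j, s i j ≠ 0 := by
      by_contra! h
      exact hs0 (Matrix.ext h)
    have hj₀ : j₀ ≠ Fin.last n := fun e => h (e ▸ hs.2.1 i₀)
    exact ⟨{
      toFun := fun z => z.1 i₀ (Fin.last n) / s i₀ j₀
      invFun := fun c => ⟨s.updateCol (Fin.last n) fun i => c * s i j₀,
        updateCol_mem_fibre hs (by simp [hs.1])
          (rank_updateCol_le_one hs.2.2.2 (Fin.last n) j₀ c)⟩
      left_inv := by
        rintro ⟨z, hz⟩
        ext i j
        by_cases hj : j = Fin.last n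
        · subst hj
          have hm := minor_eq_of_rank_le_one hz.1.1.2 i₀ i (Fin.last n) j₀
          rw [apply_of_mem_fibre hz _ hj₀, apply_of_mem_fibre hz _ hj₀] at hm
          simp only [updateCol_self]
          rw [div_mul_eq_mul_div, hm, mul_div_cancel_left₀ _ h]
        · simp [hj, apply_of_mem_fibre hz i hj]
      right_inv := fun c => by simp [h] }⟩
  · have h0 : (0 : Matrix (Fin (n + 1)) (Fin (n + 1)) ℂ) ∈ Sset n := by simp [Sset]
    exact ⟨{
      toFun := fun z i => z.1 i.castSucc (Fin.last n)
      invFun := fun v => ⟨(0 : Matrix (Fin (n + 1)) (Fin (n + 1)) ℂ).updateCol (Fin.last n)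
          (Fin.snoc v 0 : Fin (n + 1) → ℂ), updateCol_mem_fibre h0 (by simp) (by
        convert rank_vecMulVec_le (Fin.snoc v 0 : Fin (n + 1) → ℂ)
          (Pi.single (Fin.last n) (1 : ℂ)) using 2
        ext i j
        by_cases hj : j = Fin.last n
        · subst hj
          simp [vecMulVec_apply]
        · simp [vecMulVec_apply, hj])⟩
      left_inv := by
        rintro ⟨z, hz⟩
        ext i j
        by_cases hj : j = Fin.last n
        · subst hj
          induction i using Fin.lastCases with
          | last => simp [hz.1.2]
          | cast i => simp
        · simp [hj, apply_of_mem_fibre hz i hj]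
      right_inv := fun v => by
        ext i
        simp }⟩

end
end

section
/- The complement of the image of ν in 𝒵 satisfies 𝒵 \ ν(O) = 𝒲 \ 𝒮. In particular ν is not surjective onto 𝒵, and the points of 𝒵 not in the image of ν are exactly the matrices w ∈ 𝒵 whose (n+1)-st row is zero but which do not lie in 𝒮. (Claim (4) of the paper's Section 4.4.) -/
/-! The point is that a matrix `w` of `𝒵` lies in the image of `ν` exactly when its last row is
nonzero or `w` belongs to `𝒮`.

Write `t` for the corner entry of `w`.

* If `t ≠ 0`, rescaling the last column of `M(w)` by `-1/t` gives a matrix of rank at most one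
  whose corner entry is `t`, hence traceless, and `ν` carries it to `w`
  (`mem_image_of_corner_ne_zero`).
* If `t = 0`, then `M(w) = w`, so `w` itself lies in `O`, and `ν` replaces its last column by zero.
  When the last row is nonzero, the vanishing of `2 × 2` minors through the corner forces the last
  column of `w` to be zero, so `ν(w) = w` (`mem_image_of_last_row_ne_zero`). The same formula shows
  that `ν` fixes the points of `𝒮`.
* Conversely `ν` preserves the last row, and if that row vanishes then `ν` kills the last column;
  a point of the image with zero last row is thus in `𝒮` (`mem_image_iff`).

The elementary matrix `E_{1,n+1}` has zero last row and nonzero last column, so it lies in `𝒵` but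
not in the image. -/

open Matrix

noncomputable section

/-- The `2 × 2` minors of a matrix of rank at most one vanish. -/
lemma minor_eq_zero_of_rank_le_one {m : ℕ} {A : Matrix (Fin m) (Fin m) ℂ} (hA : A.rank ≤ 1)
    (i j k l : Fin m) : A i k * A j l = A i l * A j k := by
  rw [rank_eq_finrank_span_cols, finrank_le_one_iff] at hA
  obtain ⟨v, hv⟩ := hA
  have key : ∀ c, ∃ a : ℂ, ∀ r, A r c = a * v.1 r := by
    intro c
    obtain ⟨a, ha⟩ := hv ⟨A.col c, Submodule.subset_span ⟨c, rfl⟩⟩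
    refine ⟨a, fun r => ?_⟩
    have := congrFun (congrArg Subtype.val ha) r
    simpa using this.symm
  obtain ⟨a, ha⟩ := key k
  obtain ⟨b, hb⟩ := key l
  rw [ha i, hb j, hb i, ha j]
  ring

lemma Mw_eq_self {n : ℕ} {w : Matrix (Fin (n + 1)) (Fin (n + 1)) ℂ}
    (h : w (Fin.last n) (Fin.last n) = 0) : Mw n w = w := by
  ext i j
  by_cases hij : i = Fin.last n ∧ j = Fin.last n
  · obtain ⟨rfl, rfl⟩ := hij
    simp [Mw, h]
  · simp [Mw, hij]

lemma nu_eq_self {n : ℕ} {w : Matrix (Fin (n + 1)) (Fin (n + 1)) ℂ}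
    (h : ∀ i, w i (Fin.last n) = 0) : nu n w = w := by
  ext i j
  by_cases hij : i ≠ Fin.last n ∧ j = Fin.last n
  · obtain ⟨hi, rfl⟩ := hij
    simp [nu, h]
  · simp only [nu, of_apply, if_neg hij]

lemma nu_last_row (n : ℕ) (z : Matrix (Fin (n + 1)) (Fin (n + 1)) ℂ) (j : Fin (n + 1)) :
    nu n z (Fin.last n) j = z (Fin.last n) j := by
  simp [nu]

lemma mem_image_of_corner_ne_zero {n : ℕ} {w : Matrix (Fin (n + 1)) (Fin (n + 1)) ℂ}
    (hw : w ∈ Zset n) (h : w (Fin.last n) (Fin.last n) ≠ 0) : w ∈ nu n '' Oset n := by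
  set t := w (Fin.last n) (Fin.last n) with ht
  -- Column scaling by `-1/t` in the last position inverts `ν` and cannot raise the rank.
  set z := Mw n w * diagonal (fun j => if j = Fin.last n then -t⁻¹ else 1) with hz
  have hzcol : ∀ i, i ≠ Fin.last n → z i (Fin.last n) = w i (Fin.last n) * -t⁻¹ := by
    intro i hi
    simp [hz, Mw, hi]
  have hzoff : ∀ i j, j ≠ Fin.last n → z i j = w i j := by
    intro i j hj
    simp [hz, Mw, hj]
  have hzt : z (Fin.last n) (Fin.last n) = t := by
    simp [hz, Mw, ← ht]
    field_simp
  refine ⟨z, ⟨?_, (rank_mul_le_left _ _).trans hw.2⟩, ?_⟩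
  · rw [← hw.1]
    refine Finset.sum_congr rfl fun i _ => ?_
    by_cases hi : i = Fin.last n
    · subst hi
      exact hzt
    · exact hzoff i i hi
  · ext i j
    by_cases hj : j = Fin.last n
    · subst hj
      by_cases hi : i = Fin.last n
      · subst hi
        rw [nu_last_row, hzt]
      · simp only [nu, of_apply, ne_eq, hi, not_false_eq_true, and_self, if_true, hzt, hzcol i hi]
        field_simp
    · simp [nu, hj, hzoff i j hj]

lemma mem_image_of_last_row_ne_zero {n : ℕ} {w : Matrix (Fin (n + 1)) (Fin (n + 1)) ℂ}
    (hw : w ∈ Zset n) (h : ¬ ∀ j, w (Fin.last n) j = 0) : w ∈ nu n '' Oset n := by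
  by_cases ht : w (Fin.last n) (Fin.last n) = 0
  · have hr : w.rank ≤ 1 := by simpa only [Mw_eq_self ht] using hw.2
    obtain ⟨j, hj⟩ := not_forall.1 h
    refine ⟨w, ⟨hw.1, hr⟩, nu_eq_self fun i => ?_⟩
    have := minor_eq_zero_of_rank_le_one hr i (Fin.last n) (Fin.last n) j
    rw [ht, mul_zero] at this
    exact (mul_eq_zero.1 this).resolve_right hj
  · exact mem_image_of_corner_ne_zero hw ht

/-- Criterion for a point of `𝒵` to be in the image of `ν`. -/
lemma mem_image_iff {n : ℕ} {w : Matrix (Fin (n + 1)) (Fin (n + 1)) ℂ} (hw : w ∈ Zset n) :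
    w ∈ nu n '' Oset n ↔ (∀ j, w (Fin.last n) j = 0) → w ∈ Sset n := by
  constructor
  · rintro ⟨z, -, rfl⟩ hrow
    refine ⟨hrow, fun i => ?_, hw.1, ?_⟩
    · by_cases hi : i = Fin.last n
      · rw [hi]
        exact hrow _
      · have ht : z (Fin.last n) (Fin.last n) = 0 :=
          (nu_last_row n z _).symm.trans (hrow _)
        simp [nu, ht, hi]
    · simpa only [Mw_eq_self (hrow _)] using hw.2
  · intro h
    by_cases hrow : ∀ j, w (Fin.last n) j = 0
    · obtain ⟨-, hcol, htr, hr⟩ := h hrow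
      exact ⟨w, ⟨htr, hr⟩, nu_eq_self hcol⟩
    · exact mem_image_of_last_row_ne_zero hw hrow

/-- Claim (4) of the paper's Section 4.4: `𝒵 \ ν(O) = 𝒲 \ 𝒮`; in particular `ν` is not
surjective onto `𝒵`, and the points of `𝒵` missed by `ν` are exactly the matrices in
`𝒵` whose `(n+1)`-st row is zero but which do not lie in `𝒮`. -/
theorem stmt12 (n : ℕ) (hn : 2 ≤ n) :
    Zset n \ (nu n '' Oset n) = Wset n \ Sset n ∧
    ¬ Zset n ⊆ nu n '' Oset n ∧
    {w ∈ Zset n | w ∉ nu n '' Oset n} =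
      {w ∈ Zset n | (∀ j, w (Fin.last n) j = 0) ∧ w ∉ Sset n} := by
  have hset : {w ∈ Zset n | w ∉ nu n '' Oset n} =
      {w ∈ Zset n | (∀ j, w (Fin.last n) j = 0) ∧ w ∉ Sset n} := by
    ext w
    refine and_congr_right fun hw => ?_
    rw [mem_image_iff hw, Classical.not_imp]
  refine ⟨?_, fun hsub => ?_, hset⟩
  · refine Eq.trans hset ?_
    ext w
    exact and_assoc.symm
  · have h0 : (0 : Fin (n + 1)) ≠ Fin.last n := by
      rw [ne_eq, Fin.ext_iff, Fin.val_last, Fin.val_zero]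
      omega
    -- The elementary matrix `E_{1,n+1}`, written as an outer product to bound its rank.
    set e : Matrix (Fin (n + 1)) (Fin (n + 1)) ℂ :=
      vecMulVec (Pi.single 0 1) (Pi.single (Fin.last n) 1) with he
    have hrow : ∀ j, e (Fin.last n) j = 0 := fun j => by
      simp [he, vecMulVec_apply, h0.symm]
    have heZ : e ∈ Zset n := by
      refine ⟨?_, ?_⟩
      · simp [he, trace_vecMulVec, h0]
      · rw [Mw_eq_self (hrow _)]
        exact rank_vecMulVec_le _ _
    have hcol := ((mem_image_iff heZ).1 (hsub heZ) hrow).2.1 0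
    simp [he, vecMulVec_apply] at hcol

end
end
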